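/- arXiv:2602.14206 — 4 statements merged into one kernel-verified Lean document; each statement's English description precedes it below -/
import Mathlib

section
/- Let n ≥ 4, let (a_{ij})_{1≤i,j≤n} and (b_{ij})_{1≤i,j≤n} be symmetric real arrays such that Σ_{j≠i} b_{ij} = 0 for every i, and let π be a uniformly distributed random permutation of {1,…,n}. Set S = Σ_{i≠j} a_{ij} b_{π(i)π(j)}, μ₂ = (1/(n(n−1))) Σ_{i≠j} b_{ij}², S₁ = Σ_{i≠j} a_{ij}², L_i = Σ_{j≠i} a_{ij}, S₂ = Σ_{i=1}^n L_i², S₃ = Σ_{i=1}^n L_i. Then E[S] = 0 and Var(S) = μ₂·{ 2S₁ − (4/(n−2))(S₂ − S₁) + (2/((n−2)(n−3)))(S₃² + 2S₁ − 4S₂) }. -/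
open Finset

/-- Expectation with respect to a uniformly distributed random permutation of `{1, …, n}`:
the average of `f` over the symmetric group on `Fin n`. -/
noncomputable def permE (n : ℕ) (f : Equiv.Perm (Fin n) → ℝ) : ℝ :=
  (∑ π : Equiv.Perm (Fin n), f π) / (Nat.factorial n)

/-!
Write `X i j = b (π i) (π j)` and let `N` be the number of indices. Since the rows of `b` sum to
zero and `π` is exchangeable, averaging over an index that does not occur yet expresses a mixed
second moment of the `X i j` through moments with one index fewer. All of them are therefore
multiples of `μ₂`: it is `μ₂` for equal pairs, `-μ₂ / (N - 2)` for pairs sharing one index, and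
`2 * μ₂ / ((N - 2) * (N - 3))` for disjoint pairs. Summing against `a` shows that the covariance of
`X i j` with the statistic is `2 * (N - 1) / (N - 3) * μ₂` times the `(i, j)` entry of the doubly
centred array `a`, and summing against `a` once more gives the variance.
-/

section OffDiagonalSums

variable {α M R K : Type*} [Fintype α] [DecidableEq α] [AddCommMonoid M] [CommRing R]
  [Field K]

/-- The off-diagonal row sum `∑_{j ≠ i} f i j`; for the array `a` these are the `L i`. -/
def rowSum (f : α → α → M) (i : α) : M :=
  ∑ j ∈ univ \ {i}, f i j

/-- The sum `∑_{i ≠ j} f i j` over ordered pairs of distinct indices. -/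
def offDiagSum (f : α → α → M) : M :=
  ∑ i, rowSum f i

/-- The double-indexed permutation statistic `S = ∑_{i ≠ j} a i j * b (π i) (π j)`. -/
def permStat (a b : α → α → R) (π : Equiv.Perm α) : R :=
  offDiagSum fun i j => a i j * b (π i) (π j)

lemma offDiagSum_congr {f g : α → α → M} (h : ∀ i j, i ≠ j → f i j = g i j) :
    offDiagSum f = offDiagSum g :=
  sum_congr rfl fun i _ => sum_congr rfl fun j hj => h i j (by simpa [eq_comm] using hj)

lemma offDiagSum_comm (f : α → α → M) : offDiagSum (fun i j => f j i) = offDiagSum f :=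
  sum_comm' (by simp [eq_comm])

lemma rowSum_comp_perm (f : α → α → M) (σ : Equiv.Perm α) (i : α) :
    rowSum (fun x y => f (σ x) (σ y)) i = rowSum f (σ i) :=
  sum_equiv σ (by simp) fun _ _ => rfl

lemma offDiagSum_comp_perm (f : α → α → M) (σ : Equiv.Perm α) :
    offDiagSum (fun x y => f (σ x) (σ y)) = offDiagSum f := by
  simp only [offDiagSum, rowSum_comp_perm, Equiv.sum_comp σ (rowSum f)]

lemma offDiagSum_const (c : R) :
    offDiagSum (fun _ _ : α => c) = Fintype.card α * (Fintype.card α - 1) * c := by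
  rcases isEmpty_or_nonempty α
  · simp [offDiagSum]
  · simp [offDiagSum, rowSum, card_sdiff, Nat.cast_sub Fintype.card_pos, mul_assoc]

lemma offDiagSum_ite_left (f : α → α → M) (i : α) :
    offDiagSum (fun k l => if k = i then f k l else 0) = rowSum f i := by
  simp [offDiagSum, rowSum, sum_ite_irrel]

lemma offDiagSum_ite_right {f : α → α → M} (hf : ∀ k l, f k l = f l k) (i : α) :
    offDiagSum (fun k l => if l = i then f k l else 0) = rowSum f i := by
  rw [← offDiagSum_comm, ← offDiagSum_ite_left]
  simp only [hf]

lemma offDiagSum_ite_ite (f : α → α → M) {i j : α} (hij : i ≠ j) :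
    offDiagSum (fun k l => if k = i then if l = j then f k l else 0 else 0) = f i j := by
  simp [offDiagSum, rowSum, sum_ite_irrel, hij.symm]

lemma offDiagSum_mul_rowSum_left (a : α → α → R) :
    offDiagSum (fun i j => a i j * rowSum a i) = ∑ i, rowSum a i ^ 2 := by
  simp only [offDiagSum, rowSum, ← sum_mul, sq]

lemma offDiagSum_mul_rowSum_right {a : α → α → R} (ha : ∀ i j, a i j = a j i) :
    offDiagSum (fun i j => a i j * rowSum a j) = ∑ i, rowSum a i ^ 2 := by
  rw [← offDiagSum_mul_rowSum_left, ← offDiagSum_comm]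
  simp only [ha]

lemma offDiagSum_mul_of_overlap {a g : α → α → R} (ha : ∀ k l, a k l = a l k)
    (hg : ∀ k l, g k l = g l k) {i j : α} (hij : i ≠ j) {p q r : R} (hp : g i j = p)
    (hqi : ∀ k, k ≠ i → k ≠ j → g i k = q) (hqj : ∀ k, k ≠ i → k ≠ j → g j k = q)
    (hr : ∀ k l, k ≠ i → k ≠ j → l ≠ i → l ≠ j → k ≠ l → g k l = r) :
    offDiagSum (fun k l => a k l * g k l) =
      2 * (p - 2 * q + r) * a i j + 2 * (q - r) * (rowSum a i + rowSum a j)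
        + r * offDiagSum a := by
  have hterm : ∀ k l, k ≠ l → a k l * g k l =
      (p - 2 * q + r) * ((if k = i then if l = j then a k l else 0 else 0)
          + (if k = j then if l = i then a k l else 0 else 0))
        + (q - r) * ((if k = i then a k l else 0) + (if k = j then a k l else 0)
          + (if l = i then a k l else 0) + (if l = j then a k l else 0)) + r * a k l := by
    grind
  rw [offDiagSum_congr hterm]
  have hpick := offDiagSum_ite_ite a hij
  have hpick' := offDiagSum_ite_ite a hij.symm
  have hli := offDiagSum_ite_left a i
  have hlj := offDiagSum_ite_left a j
  have hri := offDiagSum_ite_right ha i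
  have hrj := offDiagSum_ite_right ha j
  simp only [offDiagSum, rowSum, sum_add_distrib, ← mul_sum] at *
  rw [hpick, hpick', hli, hlj, hri, hrj, ha j i]
  ring

/-- The average of `f i j` over ordered pairs of distinct indices; `μ₂` is the case
`f i j = b i j ^ 2`. -/
def offDiagMean (f : α → α → K) : K :=
  1 / ((Fintype.card α : K) * (Fintype.card α - 1)) * offDiagSum f

/-- The doubly centred array: the off-diagonal entries of `a`, corrected by functions of one index
and a constant so that, for symmetric `a`, all off-diagonal row sums vanish. -/
def doublyCentered (a : α → α → K) (i j : α) : K :=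
  a i j - (rowSum a i + rowSum a j) / (Fintype.card α - 2)
    + offDiagSum a / ((Fintype.card α - 1) * (Fintype.card α - 2))

lemma offDiagSum_mul_doublyCentered {a : α → α → K} (ha : ∀ i j, a i j = a j i) :
    offDiagSum (fun i j => a i j * doublyCentered a i j) =
      offDiagSum (fun i j => a i j ^ 2) - 2 / (Fintype.card α - 2) * ∑ i, rowSum a i ^ 2
        + offDiagSum a ^ 2 / ((Fintype.card α - 1) * (Fintype.card α - 2)) := by
  have hexpand : ∀ i j, i ≠ j → a i j * doublyCentered a i j =
      a i j ^ 2 - (a i j * rowSum a i + a i j * rowSum a j) / (Fintype.card α - 2)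
        + a i j * (offDiagSum a / ((Fintype.card α - 1) * (Fintype.card α - 2))) := by
    intro i j _
    rw [doublyCentered]
    ring
  have hleft := offDiagSum_mul_rowSum_left a
  have hright := offDiagSum_mul_rowSum_right ha
  rw [offDiagSum_congr hexpand]
  simp only [offDiagSum, rowSum, sum_add_distrib, sum_sub_distrib, ← sum_div, ← sum_mul] at *
  rw [hleft, hright]
  ring

end OffDiagonalSums

section Moments

open scoped BigOperators

variable {α K : Type*} [Fintype α] [DecidableEq α] [Field K] [CharZero K]

lemma expect_offDiagSum {ι : Type*} [Fintype ι] (f : ι → α → α → K) :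
    𝔼 x, offDiagSum (f x) = offDiagSum fun i j => 𝔼 x, f x i j := by
  simp only [offDiagSum, rowSum, expect_sum_comm]

lemma expect_perm_pair (f : α → α → K) {i j : α} (hij : i ≠ j) :
    𝔼 π : Equiv.Perm α, f (π i) (π j) = offDiagMean f := by
  have hpair : ∀ k l, k ≠ l →
      𝔼 π : Equiv.Perm α, f (π k) (π l) = 𝔼 π : Equiv.Perm α, f (π i) (π j) := by
    intro k l hkl
    obtain ⟨σ, rfl, rfl⟩ := MulAction.is_two_pretransitive_iff.mp
      (Equiv.Perm.isMultiplyPretransitive α 2) hij hkl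
    exact Fintype.expect_equiv (Equiv.mulRight σ) _ _ fun _ => rfl
  have htotal : offDiagSum f = Fintype.card α * (Fintype.card α - 1)
      * 𝔼 π : Equiv.Perm α, f (π i) (π j) :=
    calc offDiagSum f = 𝔼 π : Equiv.Perm α, offDiagSum (fun k l => f (π k) (π l)) := by
          simp only [offDiagSum_comp_perm, Fintype.expect_const]
      _ = offDiagSum fun _ _ : α => 𝔼 π : Equiv.Perm α, f (π i) (π j) := by
          rw [expect_offDiagSum, offDiagSum_congr hpair]
      _ = _ := offDiagSum_const _
  have hcard : (Fintype.card α : K) ≠ 0 := mod_cast (Fintype.card_pos_iff.mpr ⟨i⟩).ne'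
  have hcard' : (Fintype.card α : K) - 1 ≠ 0 :=
    sub_ne_zero.mpr (mod_cast (Fintype.one_lt_card_iff.mpr ⟨i, j, hij⟩).ne')
  rw [offDiagMean, htotal]
  field_simp

lemma expect_mul_entry_of_notMem {b : α → α → K} (hb : ∀ i, rowSum b i = 0) {s : Finset α}
    {k l : α} (hk : k ∈ s) (hl : l ∉ s) {w : Equiv.Perm α → K}
    (hw : ∀ π σ : Equiv.Perm α, (∀ x ∈ s, π x = σ x) → w π = w σ) :
    𝔼 π, w π * b (π k) (π l) =
      -(∑ m ∈ s \ {k}, 𝔼 π, w π * b (π k) (π m)) / (Fintype.card α - #s) := by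
  have hfresh : ∀ m ∈ sᶜ, 𝔼 π, w π * b (π k) (π m) = 𝔼 π, w π * b (π k) (π l) := by
    intro m hm
    have hm' : m ∉ s := mem_compl.mp hm
    have hfix : ∀ π : Equiv.Perm α, ∀ x ∈ s, π x = (π * Equiv.swap m l) x := fun π x hx => by
      rw [Equiv.Perm.mul_apply, Equiv.swap_apply_of_ne_of_ne (ne_of_mem_of_not_mem hx hm')
        (ne_of_mem_of_not_mem hx hl)]
    refine Fintype.expect_equiv (Equiv.mulRight (Equiv.swap m l)) _ _ fun π => ?_
    rw [Equiv.coe_mulRight, ← hw _ _ (hfix π), ← hfix π k hk, Equiv.Perm.mul_apply,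
      Equiv.swap_apply_right]
  have hsum : ∑ m ∈ univ \ {k}, 𝔼 π, w π * b (π k) (π m) = 0 := by
    rw [← expect_sum_comm]
    refine expect_eq_zero fun π _ => ?_
    rw [← mul_sum]
    exact mul_eq_zero_of_right _ ((rowSum_comp_perm b π k).trans (hb (π k)))
  have hcompl : (univ \ {k}) \ (s \ {k}) = sᶜ := by grind [mem_compl]
  rw [← sum_sdiff (sdiff_subset_sdiff (subset_univ s) Subset.rfl), hcompl,
    sum_congr rfl hfresh, sum_const, card_compl, nsmul_eq_mul,
    Nat.cast_sub (card_le_univ s)] at hsum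
  have hcard : (Fintype.card α : K) - #s ≠ 0 :=
    sub_ne_zero.mpr (mod_cast (card_lt_univ_of_notMem hl).ne')
  rw [eq_div_iff hcard]
  linear_combination hsum

lemma expect_entry_mul_self (b : α → α → K) {i j : α} (hij : i ≠ j) :
    𝔼 π : Equiv.Perm α, b (π i) (π j) * b (π i) (π j) = offDiagMean fun x y => b x y ^ 2 := by
  simp only [← sq, expect_perm_pair (fun x y => b x y ^ 2) hij]

variable {b : α → α → K}

lemma expect_entry_eq_zero (hb : ∀ i, rowSum b i = 0) {i j : α} (hij : i ≠ j) :
    𝔼 π : Equiv.Perm α, b (π i) (π j) = 0 := by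
  simpa using expect_mul_entry_of_notMem hb (mem_singleton_self i) (notMem_singleton.mpr hij.symm)
    (w := fun _ => 1) fun _ _ _ => rfl

lemma expect_entry_mul_of_common (hb : ∀ i, rowSum b i = 0) {i j k : α} (hij : i ≠ j)
    (hki : k ≠ i) (hkj : k ≠ j) :
    𝔼 π : Equiv.Perm α, b (π i) (π j) * b (π i) (π k) =
      -offDiagMean (fun x y => b x y ^ 2) / (Fintype.card α - 2) := by
  have hrest : ({i, j} : Finset α) \ {i} = {j} := by grind
  rw [expect_mul_entry_of_notMem hb (mem_insert_self i {j}) (by simp [hki, hkj])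
    fun π σ h => by rw [h i (by simp), h j (by simp)]]
  rw [hrest, sum_singleton, card_pair hij, expect_entry_mul_self b hij, Nat.cast_ofNat]

lemma expect_entry_mul_of_disjoint (hsymm : ∀ i j, b i j = b j i) (hb : ∀ i, rowSum b i = 0)
    {i j k l : α} (hij : i ≠ j) (hki : k ≠ i) (hkj : k ≠ j) (hli : l ≠ i) (hlj : l ≠ j)
    (hkl : k ≠ l) :
    𝔼 π : Equiv.Perm α, b (π i) (π j) * b (π k) (π l) =
      2 * offDiagMean (fun x y => b x y ^ 2)
        / ((Fintype.card α - 2) * (Fintype.card α - 3)) := by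
  have hrest : ({k, i, j} : Finset α) \ {k} = {i, j} := by grind
  have hi : 𝔼 π : Equiv.Perm α, b (π i) (π j) * b (π k) (π i) =
      -offDiagMean (fun x y => b x y ^ 2) / (Fintype.card α - 2) := by
    simpa only [hsymm] using expect_entry_mul_of_common hb hij hki hkj
  have hj : 𝔼 π : Equiv.Perm α, b (π i) (π j) * b (π k) (π j) =
      -offDiagMean (fun x y => b x y ^ 2) / (Fintype.card α - 2) := by
    simpa only [hsymm] using expect_entry_mul_of_common hb hij.symm hkj hki
  rw [expect_mul_entry_of_notMem hb (mem_insert_self k {i, j}) (by simp [hkl.symm, hli, hlj])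
    fun π σ h => by rw [h i (by simp), h j (by simp)]]
  rw [hrest, sum_pair hij, hi, hj, card_eq_three.mpr ⟨k, i, j, hki, hkj, hij, rfl⟩,
    Nat.cast_ofNat, ← div_div]
  ring

variable {a : α → α → K}

lemma expect_mul_permStat (w : Equiv.Perm α → K) :
    𝔼 π, w π * permStat a b π = offDiagSum fun i j => a i j * 𝔼 π, w π * b (π i) (π j) := by
  simp only [mul_expect, ← expect_offDiagSum]
  simp only [permStat, offDiagSum, rowSum, mul_sum, mul_left_comm]

lemma expect_permStat (hb : ∀ i, rowSum b i = 0) : 𝔼 π, permStat a b π = 0 := by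
  have hterm : ∀ i j, i ≠ j → a i j * 𝔼 π : Equiv.Perm α, 1 * b (π i) (π j) = 0 :=
    fun i j hij => by simp [expect_entry_eq_zero hb hij]
  have h := expect_mul_permStat (a := a) (b := b) fun _ => 1
  rw [offDiagSum_congr hterm, offDiagSum_const] at h
  simpa using h

lemma expect_entry_mul_permStat (hcard : 4 ≤ Fintype.card α) (ha : ∀ i j, a i j = a j i)
    (hsymm : ∀ i j, b i j = b j i) (hb : ∀ i, rowSum b i = 0) {i j : α} (hij : i ≠ j) :
    𝔼 π, b (π i) (π j) * permStat a b π =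
      2 * (Fintype.card α - 1) / (Fintype.card α - 3) * offDiagMean (fun x y => b x y ^ 2)
        * doublyCentered a i j := by
  have hswap : ∀ x y z w : α, 𝔼 π : Equiv.Perm α, b (π x) (π y) * b (π z) (π w) =
      𝔼 π : Equiv.Perm α, b (π y) (π x) * b (π z) (π w) := by
    simp only [hsymm, implies_true]
  rw [expect_mul_permStat, offDiagSum_mul_of_overlap ha (fun k l => by simp only [hsymm]) hij
    (expect_entry_mul_self b hij)
    (fun k hki hkj => expect_entry_mul_of_common hb hij hki hkj)
    (fun k hki hkj => (hswap i j j k).trans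
      (expect_entry_mul_of_common hb hij.symm hkj hki))
    (fun k l hki hkj hli hlj hkl =>
      expect_entry_mul_of_disjoint hsymm hb hij hki hkj hli hlj hkl)]
  have hcard1 : (Fintype.card α : K) - 1 ≠ 0 := sub_ne_zero.mpr (mod_cast by lia)
  have hcard2 : (Fintype.card α : K) - 2 ≠ 0 := sub_ne_zero.mpr (mod_cast by lia)
  have hcard3 : (Fintype.card α : K) - 3 ≠ 0 := sub_ne_zero.mpr (mod_cast by lia)
  rw [doublyCentered]
  field_simp
  ring

lemma expect_permStat_sq (hcard : 4 ≤ Fintype.card α) (ha : ∀ i j, a i j = a j i)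
    (hsymm : ∀ i j, b i j = b j i) (hb : ∀ i, rowSum b i = 0) :
    𝔼 π, permStat a b π ^ 2 =
      2 * (Fintype.card α - 1) / (Fintype.card α - 3) * offDiagMean (fun i j => b i j ^ 2)
        * offDiagSum (fun i j => a i j * doublyCentered a i j) := by
  have hterm : ∀ i j, i ≠ j → a i j * 𝔼 π, permStat a b π * b (π i) (π j) =
      2 * (Fintype.card α - 1) / (Fintype.card α - 3) * offDiagMean (fun x y => b x y ^ 2)
        * (a i j * doublyCentered a i j) := by
    intro i j hij
    simp only [mul_comm (permStat a b _), expect_entry_mul_permStat hcard ha hsymm hb hij]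
    ring
  simp only [sq (permStat a b _), expect_mul_permStat]
  rw [offDiagSum_congr hterm]
  simp only [offDiagSum, rowSum, mul_sum]

theorem stmt5_general (hcard : 4 ≤ Fintype.card α) (ha : ∀ i j, a i j = a j i)
    (hsymm : ∀ i j, b i j = b j i) (hb : ∀ i, rowSum b i = 0) :
    𝔼 π, permStat a b π = 0 ∧
      𝔼 π, permStat a b π ^ 2 - (𝔼 π, permStat a b π) ^ 2 =
        offDiagMean (fun i j => b i j ^ 2) *
          (2 * offDiagSum (fun i j => a i j ^ 2)
            - 4 / ((Fintype.card α : K) - 2)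
              * (∑ i, rowSum a i ^ 2 - offDiagSum fun i j => a i j ^ 2)
            + 2 / (((Fintype.card α : K) - 2) * (Fintype.card α - 3))
              * ((∑ i, rowSum a i) ^ 2 + 2 * offDiagSum (fun i j => a i j ^ 2)
                - 4 * ∑ i, rowSum a i ^ 2)) := by
  have hcard1 : (Fintype.card α : K) - 1 ≠ 0 := sub_ne_zero.mpr (mod_cast by lia)
  have hcard2 : (Fintype.card α : K) - 2 ≠ 0 := sub_ne_zero.mpr (mod_cast by lia)
  have hcard3 : (Fintype.card α : K) - 3 ≠ 0 := sub_ne_zero.mpr (mod_cast by lia)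
  refine ⟨expect_permStat hb, ?_⟩
  rw [expect_permStat hb, expect_permStat_sq hcard ha hsymm hb, offDiagSum_mul_doublyCentered ha,
    ← offDiagSum]
  field_simp
  ring

lemma permE_eq_expect (n : ℕ) (f : Equiv.Perm (Fin n) → ℝ) : permE n f = 𝔼 π, f π := by
  rw [permE, Fintype.expect_eq_sum_div_card, Fintype.card_perm, Fintype.card_fin]

end Moments

/-- variance of the double-indexed linear permutation statistic
`S = ∑_{i ≠ j} a_{ij} b_{π(i)π(j)}` under a uniform random permutation `π`. -/
theorem stmt5 (n : ℕ) (hn : 4 ≤ n)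
    (a b : Fin n → Fin n → ℝ)
    (ha_symm : ∀ i j, a i j = a j i) (hb_symm : ∀ i j, b i j = b j i)
    (hb_rowsum : ∀ i : Fin n, ∑ j ∈ univ \ {i}, b i j = 0)
    (S : Equiv.Perm (Fin n) → ℝ)
    (hS : ∀ π, S π = ∑ i : Fin n, ∑ j ∈ univ \ {i}, a i j * b (π i) (π j))
    (μ₂ S₁ S₂ S₃ : ℝ) (L : Fin n → ℝ)
    (hμ₂ : μ₂ = (1 / ((n : ℝ) * (n - 1))) * ∑ i : Fin n, ∑ j ∈ univ \ {i}, (b i j) ^ 2)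
    (hS₁ : S₁ = ∑ i : Fin n, ∑ j ∈ univ \ {i}, (a i j) ^ 2)
    (hL : ∀ i, L i = ∑ j ∈ univ \ {i}, a i j)
    (hS₂ : S₂ = ∑ i : Fin n, (L i) ^ 2)
    (hS₃ : S₃ = ∑ i : Fin n, L i) :
    permE n S = 0 ∧
      permE n (fun π => (S π) ^ 2) - (permE n S) ^ 2 =
        μ₂ * (2 * S₁ - (4 / ((n : ℝ) - 2)) * (S₂ - S₁)
          + (2 / (((n : ℝ) - 2) * ((n : ℝ) - 3))) * (S₃ ^ 2 + 2 * S₁ - 4 * S₂)) := by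
  obtain rfl : S = permStat a b := funext hS
  obtain rfl : L = rowSum a := funext hL
  subst hμ₂ hS₁ hS₂ hS₃
  simpa only [permE_eq_expect, offDiagMean, offDiagSum, rowSum, Fintype.card_fin] using
    stmt5_general (by simpa using hn) ha_symm hb_symm hb_rowsum
end

section
/- There exists a constant C > 0 depending only on K such that for all n ≥ 2, all h₂ ∈ (0,1) and every index 1 ≤ i ≤ n, | b̄_i − (1 − (i/n)²)/2 | ≤ C·(h₂ + 1/n). -/
open Finset MeasureTheory

/-- The cumulative distribution function `K̄(x) = ∫_{-∞}^x K(t) dt` of the kernel `K`. -/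
noncomputable def kbar (K : ℝ → ℝ) (x : ℝ) : ℝ := ∫ t in Set.Iic x, K t

/-- `B_{ij} = ∫₀¹ K̄((v - i/n)/h₂) K̄((v - j/n)/h₂) dv` (indices `1 ≤ i, j ≤ n`). -/
noncomputable def BCoef (K : ℝ → ℝ) (n : ℕ) (h₂ : ℝ) (i j : ℕ) : ℝ :=
  ∫ v in (0:ℝ)..1, kbar K ((v - i / n) / h₂) * kbar K ((v - j / n) / h₂)

/-- `b̄_i = (1/(n-1)) ∑_{k ≠ i} B_{ik}`. -/
noncomputable def bbar (K : ℝ → ℝ) (n : ℕ) (h₂ : ℝ) (i : ℕ) : ℝ :=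
  (1 / ((n : ℝ) - 1)) * ∑ k ∈ Finset.Icc 1 n, if k ≠ i then BCoef K n h₂ i k else 0

/-!
`K̄` is the average over `t`, with weights `K(t)`, of the unit steps at `t`, and two unit steps are
as far apart in `L¹` as their jumps, so `K̄` is within `∫ |t K(t)| dt` of the unit step at `0`.
Rescaling, `v ↦ K̄((v - a) / h)` is within `h ∫ |t K(t)| dt` of the unit step at `a`. Since `K̄` is
bounded by `∫ |K|`, `B_{ij}` is then within `O(h)` of the integral of the product of the steps at
`i/n` and `j/n`, which is `1 - max(i/n, j/n)`; the mean of the latter over `j ≠ i` is explicit.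
-/

open scoped BigOperators

section UnitStep

/-- The Heaviside function with its jump at `a`, right-continuous; off `a` it is the
limit of `v ↦ kbar K ((v - a) / h)` as the bandwidth `h` tends to `0`. -/
noncomputable def unitStep (a x : ℝ) : ℝ := if a ≤ x then 1 else 0

theorem monotone_unitStep (a : ℝ) : Monotone (unitStep a) := fun x y hxy => by
  unfold unitStep
  split_ifs <;> linarith

theorem measurable_uncurry_unitStep : Measurable (Function.uncurry unitStep) :=
  Measurable.ite (measurableSet_le measurable_fst measurable_snd) measurable_const measurable_const

theorem abs_unitStep_le_one (a x : ℝ) : |unitStep a x| ≤ 1 := by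
  unfold unitStep
  split_ifs <;> simp

theorem unitStep_mul_unitStep (a b x : ℝ) :
    unitStep a x * unitStep b x = unitStep (max a b) x := by
  simp only [unitStep, ite_zero_mul_ite_zero, mul_one, max_le_iff]

theorem unitStep_sub_div {h : ℝ} (hh : 0 < h) (a x : ℝ) :
    unitStep 0 ((x - a) / h) = unitStep a x := by
  simp only [unitStep, le_div_iff₀ hh, zero_mul, sub_nonneg]

theorem abs_unitStep_sub_unitStep (a b : ℝ) :
    (fun x => |unitStep a x - unitStep b x|) = (Set.Ico (min a b) (max a b)).indicator 1 := by
  ext x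
  simp only [unitStep, Set.indicator_apply, Set.mem_Ico, min_le_iff, lt_max_iff, Pi.one_apply]
  grind

theorem integrable_unitStep_sub_unitStep (a b : ℝ) :
    Integrable fun x => unitStep a x - unitStep b x := by
  have hmeas : Measurable fun x => unitStep a x - unitStep b x :=
    (monotone_unitStep a).measurable.sub (monotone_unitStep b).measurable
  rw [← integrable_norm_iff hmeas.aestronglyMeasurable]
  simp only [Real.norm_eq_abs, abs_unitStep_sub_unitStep]
  exact (integrableOn_const measure_Ico_lt_top.ne).integrable_indicator measurableSet_Ico

theorem integral_abs_unitStep_sub_unitStep (a b : ℝ) :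
    ∫ x, |unitStep a x - unitStep b x| = |a - b| := by
  rw [abs_unitStep_sub_unitStep, integral_indicator_one measurableSet_Ico,
    Real.volume_real_Ico_of_le min_le_max, max_sub_min_eq_abs']

theorem intervalIntegral_unitStep {α β m : ℝ} (hm : m ∈ Set.Icc α β) :
    ∫ x in α..β, unitStep m x = β - m := by
  have hint (x y : ℝ) : IntervalIntegrable (unitStep m) volume x y :=
    (monotone_unitStep m).intervalIntegrable
  have hleft : ∫ x in α..m, unitStep m x = ∫ _ in α..m, (0 : ℝ) :=
    intervalIntegral.integral_congr_Ioo_of_le hm.1 fun x hx => if_neg hx.2.not_ge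
  have hright : ∫ x in m..β, unitStep m x = ∫ _ in m..β, (1 : ℝ) :=
    intervalIntegral.integral_congr_Ioo_of_le hm.2 fun x hx => if_pos hx.1.le
  rw [← intervalIntegral.integral_add_adjacent_intervals (hint α m) (hint m β), hleft, hright]
  simp

end UnitStep

section Kbar

variable {K : ℝ → ℝ}

theorem abs_kbar_le (hK : Integrable K) (x : ℝ) : |kbar K x| ≤ ∫ t, |K t| :=
  abs_integral_le_integral_abs.trans
    (setIntegral_le_integral hK.abs (ae_of_all _ fun t => abs_nonneg (K t)))

theorem continuous_kbar (hK : Integrable K) : Continuous (kbar K) := by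
  have hprimitive : kbar K = fun x => kbar K 0 + ∫ t in (0 : ℝ)..x, K t := by
    ext x
    rw [← intervalIntegral.integral_Iic_sub_Iic hK.integrableOn hK.integrableOn, kbar, kbar,
      add_sub_cancel]
  rw [hprimitive]
  exact continuous_const.add
    (intervalIntegral.continuous_primitive (fun _ _ => hK.intervalIntegrable) 0)

theorem kbar_sub_unitStep_eq_integral (hKint : ∫ t, K t = 1) (x : ℝ) :
    kbar K x - unitStep 0 x = ∫ t, K t * (unitStep t x - unitStep 0 x) := by
  have hK : Integrable K := integrable_of_integral_eq_one hKint
  have hstep : (fun t => K t * unitStep t x) = (Set.Iic x).indicator K := by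
    ext t
    simp [unitStep, Set.indicator_apply]
  have hkbar : kbar K x = ∫ t, K t * unitStep t x := by
    rw [hstep, integral_indicator measurableSet_Iic, kbar]
  simp only [mul_sub]
  rw [integral_sub (hstep ▸ hK.indicator measurableSet_Iic) (hK.mul_const _), integral_mul_const,
    hKint, one_mul, hkbar]

theorem integrable_mul_unitStep_sub_unitStep (hK : Integrable K)
    (hKmoment : Integrable fun t => t * K t) :
    Integrable (fun p : ℝ × ℝ => K p.2 * (unitStep p.2 p.1 - unitStep 0 p.1))
      (volume.prod volume) := by
  have hsteps : Measurable fun p : ℝ × ℝ => unitStep p.2 p.1 - unitStep 0 p.1 :=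
    (measurable_uncurry_unitStep.comp measurable_swap).sub
      ((monotone_unitStep 0).measurable.comp measurable_fst)
  have hmeas : AEStronglyMeasurable
      (fun p : ℝ × ℝ => K p.2 * (unitStep p.2 p.1 - unitStep 0 p.1)) (volume.prod volume) :=
    hK.aestronglyMeasurable.comp_snd.mul hsteps.aestronglyMeasurable
  refine (integrable_prod_iff' hmeas).2
    ⟨ae_of_all _ fun t => (integrable_unitStep_sub_unitStep t 0).const_mul (K t), ?_⟩
  simpa only [Real.norm_eq_abs, abs_mul, integral_const_mul, integral_abs_unitStep_sub_unitStep,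
    sub_zero, mul_comm] using hKmoment.abs

theorem integrable_kbar_sub_unitStep (hKint : ∫ t, K t = 1)
    (hKmoment : Integrable fun t => t * K t) :
    Integrable fun x => kbar K x - unitStep 0 x := by
  simp only [kbar_sub_unitStep_eq_integral hKint]
  exact (integrable_mul_unitStep_sub_unitStep
    (integrable_of_integral_eq_one hKint) hKmoment).integral_prod_left

theorem integral_abs_kbar_sub_unitStep_le (hKint : ∫ t, K t = 1)
    (hKmoment : Integrable fun t => t * K t) :
    ∫ x, |kbar K x - unitStep 0 x| ≤ ∫ t, |t * K t| := by
  have hprod := integrable_mul_unitStep_sub_unitStep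
    (integrable_of_integral_eq_one hKint) hKmoment
  calc ∫ x, |kbar K x - unitStep 0 x|
      ≤ ∫ x, ∫ t, |K t * (unitStep t x - unitStep 0 x)| := by
        refine integral_mono (integrable_kbar_sub_unitStep hKint hKmoment).abs
          hprod.abs.integral_prod_left fun x => ?_
        simp only [kbar_sub_unitStep_eq_integral hKint]
        exact abs_integral_le_integral_abs
    _ = ∫ t, ∫ x, |K t * (unitStep t x - unitStep 0 x)| := integral_integral_swap hprod.abs
    _ = ∫ t, |t * K t| := by
        simp only [abs_mul, integral_const_mul, integral_abs_unitStep_sub_unitStep, sub_zero,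
          mul_comm]

theorem integrable_kbar_div_sub_unitStep (hKint : ∫ t, K t = 1)
    (hKmoment : Integrable fun t => t * K t) {h : ℝ} (hh : 0 < h) (a : ℝ) :
    Integrable fun v => kbar K ((v - a) / h) - unitStep a v := by
  simpa only [unitStep_sub_div hh] using
    ((integrable_kbar_sub_unitStep hKint hKmoment).comp_div hh.ne').comp_sub_right a

theorem integral_abs_kbar_div_sub_unitStep_le (hKint : ∫ t, K t = 1)
    (hKmoment : Integrable fun t => t * K t) {h : ℝ} (hh : 0 < h) (a : ℝ) :
    ∫ v, |kbar K ((v - a) / h) - unitStep a v| ≤ h * ∫ t, |t * K t| := by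
  calc ∫ v, |kbar K ((v - a) / h) - unitStep a v|
      = ∫ v, |kbar K ((v - a) / h) - unitStep 0 ((v - a) / h)| := by
        simp only [unitStep_sub_div hh]
    _ = ∫ v, |kbar K (v / h) - unitStep 0 (v / h)| :=
        integral_sub_right_eq_self (fun v => |kbar K (v / h) - unitStep 0 (v / h)|) a
    _ = h * ∫ x, |kbar K x - unitStep 0 x| := by
        rw [Measure.integral_comp_div (fun x => |kbar K x - unitStep 0 x|), abs_of_pos hh,
          smul_eq_mul]
    _ ≤ h * ∫ t, |t * K t| :=
        mul_le_mul_of_nonneg_left (integral_abs_kbar_sub_unitStep_le hKint hKmoment) hh.le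

theorem abs_kbar_mul_kbar_sub_unitStep_le (hK : Integrable K) (a b v x y : ℝ) :
    |kbar K x * kbar K y - unitStep (max a b) v| ≤
      (∫ t, |K t|) * |kbar K y - unitStep b v| + |kbar K x - unitStep a v| := by
  have htelescope : kbar K x * kbar K y - unitStep (max a b) v =
      kbar K x * (kbar K y - unitStep b v) + (kbar K x - unitStep a v) * unitStep b v := by
    rw [← unitStep_mul_unitStep]
    ring
  rw [htelescope]
  refine (abs_add_le _ _).trans ?_
  rw [abs_mul, abs_mul]
  gcongr
  · exact abs_kbar_le hK x
  · exact mul_le_of_le_one_right (abs_nonneg _) (abs_unitStep_le_one b v)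

theorem abs_integral_kbar_mul_kbar_sub_le (hKint : ∫ t, K t = 1)
    (hKmoment : Integrable fun t => t * K t) {h : ℝ} (hh : 0 < h) {α β a b : ℝ}
    (ha : a ∈ Set.Icc α β) (hb : b ∈ Set.Icc α β) :
    |(∫ v in α..β, kbar K ((v - a) / h) * kbar K ((v - b) / h)) - (β - max a b)| ≤
      ((∫ t, |K t|) + 1) * (h * ∫ t, |t * K t|) := by
  have hK : Integrable K := integrable_of_integral_eq_one hKint
  have hcont := continuous_kbar hK
  have hmax : max a b ∈ Set.Icc α β := ⟨le_max_of_le_left ha.1, max_le ha.2 hb.2⟩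
  have hαβ : α ≤ β := ha.1.trans ha.2
  have herr (c : ℝ) : Integrable fun v => |kbar K ((v - c) / h) - unitStep c v| :=
    (integrable_kbar_div_sub_unitStep hKint hKmoment hh c).abs
  set g : ℝ → ℝ := fun v => (∫ t, |K t|) * |kbar K ((v - b) / h) - unitStep b v| +
    |kbar K ((v - a) / h) - unitStep a v| with hg
  have hg_int : Integrable g := ((herr b).const_mul _).add (herr a)
  rw [← intervalIntegral_unitStep hmax, ← intervalIntegral.integral_sub
    (Continuous.intervalIntegrable (by fun_prop) _ _) (monotone_unitStep _).intervalIntegrable]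
  calc |∫ v in α..β, (kbar K ((v - a) / h) * kbar K ((v - b) / h) - unitStep (max a b) v)|
      ≤ ∫ v in α..β, g v :=
        intervalIntegral.norm_integral_le_of_norm_le (f := fun v =>
            kbar K ((v - a) / h) * kbar K ((v - b) / h) - unitStep (max a b) v) hαβ
          (ae_of_all _ fun v _ => abs_kbar_mul_kbar_sub_unitStep_le hK a b v _ _)
          hg_int.intervalIntegrable
    _ ≤ ∫ v, g v := by
        rw [intervalIntegral.integral_of_le hαβ]
        exact setIntegral_le_integral hg_int (ae_of_all _ fun v => by positivity)
    _ = (∫ t, |K t|) * (∫ v, |kbar K ((v - b) / h) - unitStep b v|) +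
          ∫ v, |kbar K ((v - a) / h) - unitStep a v| := by
        rw [hg, integral_add ((herr b).const_mul _) (herr a), integral_const_mul]
    _ ≤ (∫ t, |K t|) * (h * ∫ t, |t * K t|) + h * ∫ t, |t * K t| := by
        gcongr
        · exact integral_abs_kbar_div_sub_unitStep_le hKint hKmoment hh b
        · exact integral_abs_kbar_div_sub_unitStep_le hKint hKmoment hh a
    _ = ((∫ t, |K t|) + 1) * (h * ∫ t, |t * K t|) := by ring

theorem abs_BCoef_sub_le (hKint : ∫ t, K t = 1) (hKmoment : Integrable fun t => t * K t)
    {h : ℝ} (hh : 0 < h) {n i j : ℕ} (hi : i ≤ n) (hj : j ≤ n) :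
    |BCoef K n h i j - (1 - max (i : ℝ) j / n)| ≤
      ((∫ t, |K t|) + 1) * (h * ∫ t, |t * K t|) := by
  have hmem {k : ℕ} (hk : k ≤ n) : (k : ℝ) / n ∈ Set.Icc (0 : ℝ) 1 :=
    ⟨by positivity, div_le_one_of_le₀ (by exact_mod_cast hk) n.cast_nonneg⟩
  rw [← max_div_div_right n.cast_nonneg]
  exact abs_integral_kbar_mul_kbar_sub_le hKint hKmoment hh (hmem hi) (hmem hj)

end Kbar

theorem abs_expect_sub_expect_le {ι : Type*} {s : Finset ι} (hs : s.Nonempty) {f g : ι → ℝ}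
    {ε : ℝ} (hfg : ∀ k ∈ s, |f k - g k| ≤ ε) : |𝔼 k ∈ s, f k - 𝔼 k ∈ s, g k| ≤ ε := by
  rw [← expect_sub_distrib]
  exact (abs_expect_le _ _).trans (expect_le hs hfg)

section MeanOverOtherIndices

theorem card_Icc_one_erase {n i : ℕ} (hi1 : 1 ≤ i) (hi : i ≤ n) :
    (#((Icc 1 n).erase i) : ℝ) = n - 1 := by
  rw [card_erase_of_mem (mem_Icc.2 ⟨hi1, hi⟩), Nat.card_Icc, Nat.add_sub_cancel,
    Nat.cast_pred (hi1.trans hi)]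

theorem sum_Icc_one_max {n i : ℕ} (hi : i ≤ n) :
    ∑ k ∈ Icc 1 n, max (i : ℝ) k = i ^ 2 + (n * (n + 1) - i * (i + 1)) / 2 := by
  induction n, hi using Nat.le_induction with
  | base =>
    have hmax : ∀ k ∈ Icc 1 i, max (i : ℝ) k = i := fun k hk =>
      max_eq_left (by exact_mod_cast (mem_Icc.1 hk).2)
    rw [sum_congr rfl hmax]
    simp [sq]
  | succ n hn ih =>
    have hmax : (i : ℝ) ≤ (n + 1 : ℕ) := by exact_mod_cast hn.trans n.le_succ
    rw [sum_Icc_succ_top (by lia), ih, max_eq_right hmax]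
    push_cast
    ring

theorem expect_erase_one_sub_max_div {n i : ℕ} (hn : 2 ≤ n) (hi1 : 1 ≤ i) (hi : i ≤ n) :
    𝔼 k ∈ (Icc 1 n).erase i, (1 - max (i : ℝ) k / n) =
      (1 - ((i : ℝ) / n) ^ 2) / 2 - (n - i) * (2 * n - i) / (2 * n ^ 2 * (n - 1)) := by
  have hn' : (2 : ℝ) ≤ n := by exact_mod_cast hn
  have hn0 : (n : ℝ) ≠ 0 := by positivity
  have hn1 : (n : ℝ) - 1 ≠ 0 := by linarith
  rw [expect_eq_sum_div_card, card_Icc_one_erase hi1 hi, sum_erase_eq_sub (mem_Icc.2 ⟨hi1, hi⟩),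
    sum_sub_distrib, ← sum_div, sum_Icc_one_max hi, sum_const, Nat.card_Icc, max_self,
    Nat.add_sub_cancel, nsmul_one]
  field_simp
  ring

theorem abs_expect_erase_one_sub_max_div_sub_le {n i : ℕ} (hn : 2 ≤ n) (hi1 : 1 ≤ i)
    (hi : i ≤ n) :
    |𝔼 k ∈ (Icc 1 n).erase i, (1 - max (i : ℝ) k / n) - (1 - ((i : ℝ) / n) ^ 2) / 2| ≤
      1 / (n : ℝ) := by
  have hn1 : (0 : ℝ) < n - 1 := by linarith [show (2 : ℝ) ≤ n by exact_mod_cast hn]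
  have hi1' : (1 : ℝ) ≤ i := by exact_mod_cast hi1
  have hi' : (i : ℝ) ≤ n := by exact_mod_cast hi
  have hnonneg : (0 : ℝ) ≤ (n - i) * (2 * n - i) := mul_nonneg (by linarith) (by linarith)
  rw [expect_erase_one_sub_max_div hn hi1 hi, sub_right_comm, sub_self, zero_sub, abs_neg,
    abs_of_nonneg (div_nonneg hnonneg (by positivity))]
  calc ((n : ℝ) - i) * (2 * n - i) / (2 * (n : ℝ) ^ 2 * (n - 1))
      ≤ (n - 1) * (2 * n) / (2 * (n : ℝ) ^ 2 * (n - 1)) := by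
        gcongr
        · linarith
        · linarith
    _ = 1 / (n : ℝ) := by
        field_simp

end MeanOverOtherIndices

theorem bbar_eq_expect (K : ℝ → ℝ) (h : ℝ) {n i : ℕ} (hi1 : 1 ≤ i) (hi : i ≤ n) :
    bbar K n h i = 𝔼 k ∈ (Icc 1 n).erase i, BCoef K n h i k := by
  rw [bbar, ← sum_filter, filter_ne', expect_eq_sum_div_card, card_Icc_one_erase hi1 hi,
    one_div_mul_eq_div]

theorem abs_bbar_sub_le {K : ℝ → ℝ} (hKint : ∫ t, K t = 1)
    (hKmoment : Integrable fun t => t * K t) {h : ℝ} (hh : 0 < h) {n i : ℕ} (hn : 2 ≤ n)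
    (hi1 : 1 ≤ i) (hi : i ≤ n) :
    |bbar K n h i - (1 - ((i : ℝ) / n) ^ 2) / 2| ≤
      ((∫ t, |K t|) + 1) * (h * ∫ t, |t * K t|) + 1 / n := by
  have hs : ((Icc 1 n).erase i).Nonempty :=
    (one_lt_card_iff_nontrivial.1 (by rw [Nat.card_Icc]; lia)).erase_nonempty
  rw [bbar_eq_expect K h hi1 hi]
  exact (abs_sub_le _ _ _).trans <| add_le_add
    (abs_expect_sub_expect_le hs fun k hk =>
      abs_BCoef_sub_le hKint hKmoment hh hi (mem_Icc.1 (mem_of_mem_erase hk)).2)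
    (abs_expect_erase_one_sub_max_div_sub_le hn hi1 hi)

theorem stmt10_general {K : ℝ → ℝ} (hKint : ∫ t, K t = 1)
    (hKmoment : Integrable fun t => t * K t) :
    ∃ C > 0, ∀ n : ℕ, 2 ≤ n → ∀ h > 0, ∀ i : ℕ, 1 ≤ i → i ≤ n →
      |bbar K n h i - (1 - ((i : ℝ) / n) ^ 2) / 2| ≤ C * (h + 1 / n) := by
  refine ⟨((∫ t, |K t|) + 1) * (∫ t, |t * K t|) + 1, by positivity,
    fun n hn h hh i hi1 hi => (abs_bbar_sub_le hKint hKmoment hh hn hi1 hi).trans ?_⟩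
  have hcross : 0 ≤ ((∫ t, |K t|) + 1) * (∫ t, |t * K t|) * (1 / n) := by positivity
  linarith

/-- `|b̄_i - (1 - (i/n)²)/2| ≤ C (h₂ + 1/n)` uniformly in `1 ≤ i ≤ n`,
for a constant `C` depending only on the kernel `K`. -/
theorem stmt10 (K : ℝ → ℝ)
    (hKcont : Continuous K) (hKsymm : ∀ x, K (-x) = K x)
    (hKnonneg : ∀ x, 0 ≤ K x) (hKint : ∫ x, K x = 1)
    (hKsupp : ∀ x, x ∉ Set.Icc (-1 : ℝ) 1 → K x = 0) :
    ∃ C > 0, ∀ n : ℕ, 2 ≤ n → ∀ h₂ ∈ Set.Ioo (0 : ℝ) 1, ∀ i : ℕ, 1 ≤ i → i ≤ n →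
      |bbar K n h₂ i - (1 - ((i : ℝ) / n) ^ 2) / 2| ≤ C * (h₂ + 1 / n) := by
  obtain ⟨C, hC, hbound⟩ := stmt10_general hKint <|
    (continuous_id.mul hKcont).integrable_of_hasCompactSupport
      (HasCompactSupport.intro isCompact_Icc hKsupp).mul_left
  exact ⟨C, hC, fun n hn h₂ hh => hbound n hn h₂ hh.1⟩
end

section
/- Let (U,V) be a random vector with values in [0,1]², with U and V each uniformly distributed on [0,1], joint distribution function C(u,v) = P(U ≤ u, V ≤ v), and suppose C is continuously differentiable in its first argument with τ(u,v) = ∂₁C(u,v). Define Z₁ = ∫₀¹ 1{V ≤ v} τ(U,v) dv. Then Var(Z₁) = ∫_{[0,1]³} τ(s, v∧w) τ(s,v) τ(s,w) ds dv dw − ( ∫_{[0,1]²} τ²(u,v) du dv )². -/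
open MeasureTheory Set

/-!
By Lebesgue differentiation, `∂₁C(s, v)` is a version of the conditional probability
`P(V ≤ v | U = s)`. Under the expectation, the indicator `1{V ≤ v}` may therefore be replaced by
`τ(s, v)` once everything else depends on `U` alone. Applied to `Z₁`, this turns the mean into
`∫ τ²`. In the square, written as a double integral over `(v, w)`, the two indicators multiply to
`1{V ≤ v ∧ w}`, so that `τ(s, v ∧ w)` appears next to `τ(s, v) τ(s, w)`.
-/

open Function (uncurry)
open scoped Topology

section DistributionFunction

variable {ν : Measure ℝ} [IsFiniteMeasure ν]

theorem measureReal_Iic_sub_measureReal_Iic {a b : ℝ} (hab : a ≤ b) :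
    ν.real (Iic b) - ν.real (Iic a) = ν.real (Ioc a b) := by
  rw [← measureReal_sdiff (Iic_subset_Iic.2 hab) measurableSet_Iic, Iic_sdiff_Iic]

theorem mem_Icc_of_hasDerivAt_measureReal_Iic (hν : ν ≤ volume) {d u : ℝ}
    (hd : HasDerivAt (fun u => ν.real (Iic u)) d u) : d ∈ Icc (0 : ℝ) 1 := by
  have hmono : Monotone fun u => ν.real (Iic u) := fun a b hab =>
    measureReal_mono (Iic_subset_Iic.2 hab)
  have hmono_sub : Monotone fun u => u - ν.real (Iic u) := fun a b hab => by
    have hlip : ν.real (Ioc a b) ≤ b - a :=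
      (ENNReal.toReal_mono (by simp) (hν _)).trans_eq (Real.volume_real_Ioc_of_le hab)
    linarith [measureReal_Iic_sub_measureReal_Iic (ν := ν) hab]
  exact ⟨hd.nonneg_of_monotone hmono,
    sub_nonneg.1 (((hasDerivAt_id u).sub hd).nonneg_of_monotone hmono_sub)⟩

theorem ae_hasDerivAt_measureReal_Iic (hν : ν ≪ volume) :
    ∀ᵐ u, HasDerivAt (fun u => ν.real (Iic u)) (ν.rnDeriv volume u).toReal u := by
  have hint : Integrable (fun u => (ν.rnDeriv volume u).toReal) := Measure.integrable_toReal_rnDeriv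
  have hcdf : ∀ u, ν.real (Iic u) =
      (∫ x in (0 : ℝ)..u, (ν.rnDeriv volume x).toReal) + ν.real (Iic 0) := fun u => by
    rw [← intervalIntegral.integral_Iic_sub_Iic hint.integrableOn hint.integrableOn,
      Measure.setIntegral_toReal_rnDeriv hν, Measure.setIntegral_toReal_rnDeriv hν, sub_add_cancel]
  filter_upwards [LocallyIntegrable.ae_hasDerivAt_integral hint.locallyIntegrable] with u hu
  exact ((hu 0).add_const _).congr_of_eventuallyEq (.of_forall hcdf)

theorem eq_withDensity_of_ae_hasDerivAt_measureReal_Iic {s : Set ℝ} (hs : MeasurableSet s)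
    (hν : ν ≪ volume.restrict s) {f : ℝ → ℝ}
    (hf : ∀ᵐ u ∂volume.restrict s, HasDerivAt (fun u => ν.real (Iic u)) (f u) u) :
    ν = (volume.restrict s).withDensity fun u => ENNReal.ofReal (f u) := by
  have hν' : ν ≪ volume := hν.trans Measure.absolutelyContinuous_restrict
  have hdens : ν.rnDeriv volume =ᵐ[volume.restrict s] fun u => ENNReal.ofReal (f u) := by
    filter_upwards [hf, ae_restrict_of_ae (ae_hasDerivAt_measureReal_Iic hν'),
      ae_restrict_of_ae (ν.rnDeriv_lt_top volume)] with u hfu hru hlt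
    rw [hfu.unique hru, ENNReal.ofReal_toReal hlt.ne]
  calc ν = ν.restrict s :=
        (Measure.restrict_eq_self_of_ae_mem (hν.ae_le (ae_restrict_mem hs))).symm
    _ = (volume.restrict s).withDensity (ν.rnDeriv volume) := by
        rw [← restrict_withDensity', Measure.withDensity_rnDeriv_eq _ _ hν']
    _ = _ := withDensity_congr_ae hdens

end DistributionFunction

section Measurability

theorem aemeasurable_of_ae_hasDerivAt {β : Type*} [MeasurableSpace β] {μ : Measure (ℝ × β)}
    {F F' : ℝ → β → ℝ} (hF : Measurable (uncurry F))
    (hF' : ∀ᵐ p ∂μ, HasDerivAt (fun u => F u p.2) (F' p.1 p.2) p.1) :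
    AEMeasurable (uncurry F') μ :=
  aemeasurable_of_tendsto_metrizable_ae (𝓝[>] (0 : ℝ))
    (f := fun t (p : ℝ × β) => t⁻¹ • (F (p.1 + t) p.2 - F p.1 p.2))
    (fun t => (((hF.comp (by fun_prop : Measurable fun p : ℝ × β => (p.1 + t, p.2))).sub
      hF).const_smul t⁻¹).aemeasurable)
    (hF'.mono fun _ hp => hp.tendsto_slope_zero_right)

theorem quasiMeasurePreserving_min {α : Type*} [LinearOrder α] [MeasurableSpace α]
    [MeasurableInf₂ α] (κ : Measure α) :
    Measure.QuasiMeasurePreserving (fun p : α × α => min p.1 p.2) (κ.prod κ) κ := by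
  refine ⟨measurable_inf, Measure.AbsolutelyContinuous.mk fun s hs h0 => ?_⟩
  rw [Measure.map_apply measurable_inf hs]
  refine measure_mono_null (t := Prod.fst ⁻¹' s ∪ Prod.snd ⁻¹' s) (fun p hp => ?_)
    (measure_union_null (Measure.quasiMeasurePreserving_fst.preimage_null h0)
      (Measure.quasiMeasurePreserving_snd.preimage_null h0))
  rcases min_choice p.1 p.2 with h | h
  · exact .inl (by simpa only [mem_preimage, h] using hp)
  · exact .inr (by simpa only [mem_preimage, h] using hp)

theorem ae_ae_of_ae_prod_right {α β : Type*} [MeasurableSpace α] [MeasurableSpace β]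
    {μ : Measure α} {κ : Measure β} [SFinite μ] [SFinite κ] {p : α × β → Prop}
    (h : ∀ᵐ z ∂μ.prod κ, p z) : ∀ᵐ y ∂κ, ∀ᵐ x ∂μ, p (x, y) :=
  Measure.ae_ae_of_ae_prod (Measure.measurePreserving_swap.quasiMeasurePreserving.ae h)

end Measurability

section CondCDF

variable {Ω 𝒳 : Type*} [MeasurableSpace Ω] [MeasurableSpace 𝒳] {P : Measure Ω}
  {U : Ω → 𝒳} {V : Ω → ℝ} {κ : Measure ℝ} {F : 𝒳 → ℝ → ℝ}

theorem setIntegral_comp_of_map_restrict_eq_withDensity (hU : Measurable U) {A : Set Ω}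
    {f g : 𝒳 → ℝ} (hf : AEMeasurable f (P.map U)) (hf0 : 0 ≤ᵐ[P.map U] f)
    (hA : (P.restrict A).map U = (P.map U).withDensity fun s => ENNReal.ofReal (f s))
    (hg : AEStronglyMeasurable g (P.map U)) :
    ∫ ω in A, g (U ω) ∂P = ∫ s, f s * g s ∂P.map U := by
  have hle : (P.restrict A).map U ≤ P.map U := Measure.map_mono Measure.restrict_le_self hU
  rw [← integral_map hU.aemeasurable (hg.mono_measure hle), hA,
    integral_withDensity_eq_integral_toReal_smul₀ hf.ennreal_ofReal
      (ae_of_all _ fun _ => ENNReal.ofReal_lt_top)]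
  refine integral_congr_ae (hf0.mono fun s hs => ?_)
  simp only [ENNReal.toReal_ofReal hs, smul_eq_mul]

/-- `F s v` is a version of the conditional distribution function `P(V ≤ v | U = s)`, for almost
every threshold `v` with respect to `κ`. The conditioning is encoded by saying that the law of `U`
on the event `V ≤ v` has density `F · v` with respect to the law of `U`. -/
structure IsCondCDF (P : Measure Ω) (U : Ω → 𝒳) (V : Ω → ℝ) (κ : Measure ℝ) (F : 𝒳 → ℝ → ℝ) :
    Prop where
  aemeasurable : AEMeasurable (uncurry F) ((P.map U).prod κ)
  ae_mem_Icc : ∀ᵐ p ∂(P.map U).prod κ, F p.1 p.2 ∈ Icc (0 : ℝ) 1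
  ae_map_restrict : ∀ᵐ v ∂κ,
    (P.restrict {ω | V ω ≤ v}).map U = (P.map U).withDensity fun s => ENNReal.ofReal (F s v)

theorem measurable_measureReal_le_and_le [SFinite P] {U : Ω → ℝ} (hU : Measurable U)
    (hV : Measurable V) : Measurable fun p : ℝ × ℝ => P.real {ω | U ω ≤ p.1 ∧ V ω ≤ p.2} :=
  have hset : MeasurableSet {q : (ℝ × ℝ) × Ω | U q.2 ≤ q.1.1 ∧ V q.2 ≤ q.1.2} :=
    by measurability
  (measurable_measure_prodMk_left hset).ennreal_toReal

namespace IsCondCDF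

theorem of_ae_hasDerivAt [IsFiniteMeasure P] [SFinite κ] {U : Ω → ℝ} (hU : Measurable U)
    (hV : Measurable V) {s : Set ℝ} (hs : MeasurableSet s) (hUlaw : P.map U = volume.restrict s)
    {τ : ℝ → ℝ → ℝ}
    (hτ : ∀ᵐ p ∂(P.map U).prod κ,
      HasDerivAt (fun u => P.real {ω | U ω ≤ u ∧ V ω ≤ p.2}) (τ p.1 p.2) p.1) :
    IsCondCDF P U V κ τ := by
  have hle : ∀ v, (P.restrict {ω | V ω ≤ v}).map U ≤ volume.restrict s := fun v =>
    hUlaw ▸ Measure.map_mono Measure.restrict_le_self hU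
  have hcdf : ∀ u v, P.real {ω | U ω ≤ u ∧ V ω ≤ v} =
      ((P.restrict {ω | V ω ≤ v}).map U).real (Iic u) := fun u v => by
    rw [map_measureReal_apply hU measurableSet_Iic,
      measureReal_restrict_apply (hU measurableSet_Iic)]
    rfl
  refine ⟨aemeasurable_of_ae_hasDerivAt
    (F := fun u v => P.real {ω | U ω ≤ u ∧ V ω ≤ v}) (measurable_measureReal_le_and_le hU hV) hτ,
    ?_, ?_⟩
  · filter_upwards [hτ] with p hp
    simp only [hcdf] at hp
    exact mem_Icc_of_hasDerivAt_measureReal_Iic ((hle p.2).trans Measure.restrict_le_self) hp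
  · filter_upwards [ae_ae_of_ae_prod_right hτ] with v hv
    simp only [hcdf, hUlaw] at hv ⊢
    exact eq_withDensity_of_ae_hasDerivAt_measureReal_Iic hs (hle v).absolutelyContinuous hv

theorem ae_setIntegral_comp [SFinite P] [SFinite κ] (h : IsCondCDF P U V κ F)
    (hU : Measurable U) :
    ∀ᵐ v ∂κ, ∀ g : 𝒳 → ℝ, AEStronglyMeasurable g (P.map U) →
      ∫ ω in {ω | V ω ≤ v}, g (U ω) ∂P = ∫ s, F s v * g s ∂P.map U := by
  have hmeas : ∀ᵐ v ∂κ, AEStronglyMeasurable (fun s => F s v) (P.map U) :=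
    h.aemeasurable.aestronglyMeasurable.prod_swap.prodMk_left
  filter_upwards [h.ae_map_restrict, hmeas, ae_ae_of_ae_prod_right h.ae_mem_Icc]
    with v hv hFv h01 g hg
  exact setIntegral_comp_of_map_restrict_eq_withDensity hU hFv.aemeasurable
    (h01.mono fun s hs => hs.1) hv hg

variable {X : Type*} [MeasurableSpace X] {ρ : Measure X} [SFinite ρ] {m : X → ℝ}

theorem integrable_comp_mul [SFinite P] [SFinite κ] (h : IsCondCDF P U V κ F)
    (hm : Measure.QuasiMeasurePreserving m ρ κ) {g : 𝒳 × X → ℝ}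
    (hg : Integrable g ((P.map U).prod ρ)) :
    Integrable (fun p => F p.1 (m p.2) * g p) ((P.map U).prod ρ) := by
  have hmap : Measure.QuasiMeasurePreserving (Prod.map id m) ((P.map U).prod ρ)
      ((P.map U).prod κ) := QuasiMeasurePreserving.prodMap (.id _) hm
  refine hg.bdd_mul (c := 1)
    (h.aemeasurable.comp_quasiMeasurePreserving hmap).aestronglyMeasurable ?_
  filter_upwards [hmap.ae h.ae_mem_Icc] with p hp
  exact (Real.norm_of_nonneg hp.1).trans_le hp.2

theorem integral_integral_ite_mul [SFinite P] [SFinite κ] (h : IsCondCDF P U V κ F)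
    (hU : Measurable U) (hV : Measurable V) (hm : Measure.QuasiMeasurePreserving m ρ κ)
    {g : 𝒳 → X → ℝ} (hg : Integrable (uncurry g) ((P.map U).prod ρ)) :
    ∫ ω, ∫ x, (if V ω ≤ m x then (1 : ℝ) else 0) * g (U ω) x ∂ρ ∂P =
      ∫ s, ∫ x, F s (m x) * g s x ∂ρ ∂P.map U := by
  have hset : MeasurableSet {p : Ω × X | V p.1 ≤ m p.2} :=
    measurableSet_le (hV.comp measurable_fst) (hm.measurable.comp measurable_snd)
  have hgU : Integrable (fun p : Ω × X => g (U p.1) p.2) (P.prod ρ) :=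
    ((hU.measurePreserving P).prod (.id ρ)).integrable_comp_of_integrable hg
  have hite : Integrable (uncurry fun ω x => (if V ω ≤ m x then (1 : ℝ) else 0) * g (U ω) x)
      (P.prod ρ) := by
    refine (hgU.indicator hset).congr (ae_of_all _ fun p => ?_)
    simp only [indicator_apply, mem_ofPred_eq, uncurry, ite_mul, one_mul, zero_mul]
  have hFg : Integrable (uncurry fun s x => F s (m x) * g s x) ((P.map U).prod ρ) :=
    h.integrable_comp_mul hm hg
  rw [integral_integral_swap hite, integral_integral_swap hFg]
  refine integral_congr_ae ?_
  filter_upwards [hm.ae (h.ae_setIntegral_comp hU), hg.prod_left_ae] with x hx hgx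
  rw [← hx (fun s => g s x) hgx.aestronglyMeasurable,
    ← integral_indicator (measurableSet_le hV measurable_const)]
  simp only [indicator_apply, mem_ofPred_eq, ite_mul, one_mul, zero_mul]

variable [IsFiniteMeasure P] [IsFiniteMeasure κ]

theorem integral_integral_ite_mul_self (h : IsCondCDF P U V κ F) (hU : Measurable U)
    (hV : Measurable V) :
    ∫ ω, ∫ v, (if V ω ≤ v then (1 : ℝ) else 0) * F (U ω) v ∂κ ∂P =
      ∫ s, ∫ v, F s v ^ 2 ∂κ ∂P.map U := by
  have hF : Integrable (uncurry F) ((P.map U).prod κ) := by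
    simpa only [mul_one] using! h.integrable_comp_mul (.id κ) (integrable_const (1 : ℝ))
  simpa only [sq] using! h.integral_integral_ite_mul hU hV (.id κ) hF

theorem integral_sq_integral_ite_mul_self (h : IsCondCDF P U V κ F) (hU : Measurable U)
    (hV : Measurable V) :
    ∫ ω, (∫ v, (if V ω ≤ v then (1 : ℝ) else 0) * F (U ω) v ∂κ) ^ 2 ∂P =
      ∫ s, ∫ v, ∫ w, F s (min v w) * F s v * F s w ∂κ ∂κ ∂P.map U := by
  have hFF : Integrable (uncurry fun s (p : ℝ × ℝ) => F s p.1 * F s p.2)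
      ((P.map U).prod (κ.prod κ)) := by
    simpa only [mul_one] using! h.integrable_comp_mul Measure.quasiMeasurePreserving_fst
      (h.integrable_comp_mul Measure.quasiMeasurePreserving_snd (integrable_const (1 : ℝ)))
  have hmin := quasiMeasurePreserving_min κ
  calc ∫ ω, (∫ v, (if V ω ≤ v then (1 : ℝ) else 0) * F (U ω) v ∂κ) ^ 2 ∂P
      = ∫ ω, ∫ p : ℝ × ℝ, (if V ω ≤ min p.1 p.2 then (1 : ℝ) else 0) *
          (F (U ω) p.1 * F (U ω) p.2) ∂κ.prod κ ∂P := by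
        congr 1 with ω
        rw [sq, ← integral_prod_mul]
        congr 1 with p
        by_cases h₁ : V ω ≤ p.1 <;> simp [h₁]
    _ = ∫ s, ∫ p : ℝ × ℝ, F s (min p.1 p.2) * (F s p.1 * F s p.2) ∂κ.prod κ ∂P.map U :=
        h.integral_integral_ite_mul hU hV hmin hFF
    _ = ∫ s, ∫ v, ∫ w, F s (min v w) * F s v * F s w ∂κ ∂κ ∂P.map U := by
        refine integral_congr_ae ?_
        filter_upwards [(h.integrable_comp_mul hmin hFF).prod_right_ae] with s hs
        simpa only [mul_assoc] using! integral_prod _ hs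

end IsCondCDF

end CondCDF

theorem stmt16_general {Ω : Type*} [MeasurableSpace Ω] (P : Measure Ω) [IsProbabilityMeasure P]
    (U V : Ω → ℝ) (hU : Measurable U) (hV : Measurable V)
    (hUunif : Measure.map U P = volume.restrict (Icc (0 : ℝ) 1))
    (C : ℝ → ℝ → ℝ)
    (hC : ∀ u v, C u v = (P {ω | U ω ≤ u ∧ V ω ≤ v}).toReal)
    (τ : ℝ → ℝ → ℝ)
    (hderiv : ∀ᵐ p : ℝ × ℝ ∂volume.restrict (Ioo 0 1 ×ˢ Ioo 0 1),
      HasDerivAt (fun u => C u p.2) (τ p.1 p.2) p.1)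
    (Z₁ : Ω → ℝ)
    (hZ₁ : ∀ ω, Z₁ ω = ∫ v in (0 : ℝ)..1, (if V ω ≤ v then (1 : ℝ) else 0) * τ (U ω) v) :
    (∫ ω, (Z₁ ω) ^ 2 ∂P) - (∫ ω, Z₁ ω ∂P) ^ 2 =
      (∫ s in (0 : ℝ)..1, ∫ v in (0 : ℝ)..1, ∫ w in (0 : ℝ)..1,
          τ s (min v w) * τ s v * τ s w)
        - (∫ u in (0 : ℝ)..1, ∫ v in (0 : ℝ)..1, τ u v ^ 2) ^ 2 := by
  have hUlaw : P.map U = volume.restrict (Ioc 0 1) :=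
    hUunif.trans (Measure.restrict_congr_set Ioc_ae_eq_Icc).symm
  have hsquare : volume.restrict (Ioo (0 : ℝ) 1 ×ˢ Ioo (0 : ℝ) 1) =
      (P.map U).prod (volume.restrict (Ioc 0 1)) := by
    rw [hUlaw, ← Measure.restrict_congr_set Ioo_ae_eq_Ioc, Measure.prod_restrict,
      ← Measure.volume_eq_prod]
  have hτ : IsCondCDF P U V (volume.restrict (Ioc 0 1)) τ :=
    .of_ae_hasDerivAt hU hV measurableSet_Ioc hUlaw (by simpa only [hC, hsquare] using! hderiv)
  simp only [hZ₁, intervalIntegral.integral_of_le zero_le_one]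
  rw [hτ.integral_sq_integral_ite_mul_self hU hV, hτ.integral_integral_ite_mul_self hU hV, hUlaw]

/-- for `(U,V)` with uniform marginals on `[0,1]`, joint distribution function
`C(u,v) = P(U ≤ u, V ≤ v)` differentiable in its first argument with `∂₁C = τ`, and
`Z₁ = ∫₀¹ 1{V ≤ v} τ(U,v) dv`, one has
`Var(Z₁) = ∫ τ(s, v∧w) τ(s,v) τ(s,w) ds dv dw - (∫ τ²(u,v) du dv)²`. -/
theorem stmt16 {Ω : Type*} [MeasurableSpace Ω] (P : Measure Ω) [IsProbabilityMeasure P]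
    (U V : Ω → ℝ) (hU : Measurable U) (hV : Measurable V)
    (hUunif : Measure.map U P = volume.restrict (Icc (0 : ℝ) 1))
    (hVunif : Measure.map V P = volume.restrict (Icc (0 : ℝ) 1))
    (C : ℝ → ℝ → ℝ)
    (hC : ∀ u v, C u v = (P {ω | U ω ≤ u ∧ V ω ≤ v}).toReal)
    (τ : ℝ → ℝ → ℝ)
    (hτcont : ContinuousOn (fun p : ℝ × ℝ => τ p.1 p.2) (Icc 0 1 ×ˢ Icc 0 1))
    (hderiv : ∀ v ∈ Icc (0 : ℝ) 1, ∀ u ∈ Icc (0 : ℝ) 1,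
      HasDerivWithinAt (fun u => C u v) (τ u v) (Icc 0 1) u)
    (Z₁ : Ω → ℝ)
    (hZ₁ : ∀ ω, Z₁ ω = ∫ v in (0:ℝ)..1, (if V ω ≤ v then (1 : ℝ) else 0) * τ (U ω) v) :
    (∫ ω, (Z₁ ω) ^ 2 ∂P) - (∫ ω, Z₁ ω ∂P) ^ 2 =
      (∫ s in (0:ℝ)..1, ∫ v in (0:ℝ)..1, ∫ w in (0:ℝ)..1,
          τ s (min v w) * τ s v * τ s w)
        - (∫ u in (0:ℝ)..1, ∫ v in (0:ℝ)..1, τ u v ^ 2) ^ 2 := by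
  exact stmt16_general P U V hU hV hUunif C hC τ (ae_restrict_of_forall_mem
    (measurableSet_Ioo.prod measurableSet_Ioo) fun p hp =>
      (hderiv p.2 (Ioo_subset_Icc_self hp.2) p.1 (Ioo_subset_Icc_self hp.1)).hasDerivAt
        (Icc_mem_nhds hp.1.1 hp.1.2)) Z₁ hZ₁
end

section
/- Let (U,V) be a random vector with values in [0,1]², with U and V each uniformly distributed on [0,1], joint distribution function C(u,v) = P(U ≤ u, V ≤ v), and suppose C is continuously differentiable in its first argument with τ(u,v) = ∂₁C(u,v), and that τ is itself continuously differentiable in its first argument with derivative ∂₁τ. Define Z₁ = ∫₀¹ 1{V ≤ v} τ(U,v) dv and Z₂ = ∫₀¹∫₀¹ 1{U ≤ u} τ(u,v) ∂₁τ(u,v) du dv. Then 2·Cov(Z₁, Z₂) = − ∫_{[0,1]³} τ²(u,v) τ²(u,w) du dv dw + ( ∫_{[0,1]²} τ²(u,v) du dv )². -/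
open MeasureTheory Set

open Filter Function ProbabilityTheory Topology
open scoped ENNReal

/-!
Put `A(u) = ∫₀¹ τ(u,v)² dv`. Since `U` is uniform, `τ(U,v) = P(V ≤ v | U)`, so conditioning `Z₁` on
`U` gives `E[Z₁ | U] = A(U)`. As `2 τ ∂₁τ = ∂₁(τ²)`, the fundamental theorem of calculus gives
`2 Z₂ = A(1) - A(U)`, a function of `U`. Hence
`2 Cov(Z₁, Z₂) = -Cov(Z₁, A(U)) = -Cov(E[Z₁ | U], A(U)) = -Var A(U) = -∫ A² + (∫ A)²`.
That `τ(U,v)` is the conditional probability is Lebesgue differentiation: the density of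
`P(U ∈ ·, V ≤ v)` is almost everywhere the derivative `τ(·,v)` of its distribution function.
-/

theorem continuousWithinAt_measureReal_Iic (μ : Measure ℝ) [IsFiniteMeasure μ] (x : ℝ) :
    ContinuousWithinAt (fun x => μ.real (Iic x)) (Ici x) x := by
  have h : Tendsto (fun y => μ (Iic y)) (𝓝[>] x) (𝓝 (μ (⋂ y > x, Iic y))) :=
    tendsto_measure_biInter_gt (fun y _ => measurableSet_Iic.nullMeasurableSet)
      (fun _ _ _ hyz => Iic_subset_Iic.2 hyz) ⟨x + 1, by simp, measure_ne_top _ _⟩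
  rw [show ⋂ y > x, Iic y = Iic x by ext z; simp [forall_gt_imp_ge_iff_le_of_dense]] at h
  exact continuousWithinAt_Ioi_iff_Ici.1
    ((ENNReal.tendsto_toReal (measure_ne_top _ _)).comp h)

theorem tendsto_measureReal_Iic_atBot (μ : Measure ℝ) [IsFiniteMeasure μ] :
    Tendsto (fun x => μ.real (Iic x)) atBot (𝓝 0) := by
  have h : Tendsto (fun x => μ (Iic x)) atBot (𝓝 (μ (⋂ x, Iic x))) :=
    tendsto_measure_iInter_atBot (fun _ => measurableSet_Iic.nullMeasurableSet)
      (fun _ _ hxy => Iic_subset_Iic.2 hxy) ⟨0, measure_ne_top _ _⟩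
  rw [iInter_Iic_eq_empty_iff.2 (by simp), measure_empty] at h
  exact (ENNReal.tendsto_toReal ENNReal.zero_ne_top).comp h

theorem ae_hasDerivAt_measureReal_Iic_s17 (μ : Measure ℝ) [IsFiniteMeasure μ] :
    ∀ᵐ x, HasDerivAt (fun x => μ.real (Iic x)) (μ.rnDeriv volume x).toReal x := by
  let F : StieltjesFunction ℝ :=
    { toFun := fun x => μ.real (Iic x)
      mono' := fun x y hxy => measureReal_mono (Iic_subset_Iic.2 hxy)
      right_continuous' := continuousWithinAt_measureReal_Iic μ }
  have hF : F.measure = μ := by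
    refine (Measure.ext_of_Iic _ _ fun x => ?_).symm
    rw [F.measure_Iic (tendsto_measureReal_Iic_atBot μ), sub_zero]
    exact (ofReal_measureReal).symm
  simpa only [hF] using F.ae_hasDerivAt

theorem rnDeriv_restrict_right {α : Type*} [MeasurableSpace α] {μ ν : Measure α} [SigmaFinite μ]
    [SigmaFinite ν] {s : Set α} (hs : MeasurableSet s) (h : μ ≪ ν.restrict s) :
    μ.rnDeriv (ν.restrict s) =ᵐ[ν.restrict s] μ.rnDeriv ν := by
  have hμ : μ = (ν.restrict s).withDensity (μ.rnDeriv ν) := by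
    have hμs : μ.restrict s = μ := Measure.restrict_eq_self_of_ae_mem (h.ae_le (ae_restrict_mem hs))
    rw [← restrict_withDensity hs, Measure.withDensity_rnDeriv_eq _ _
      (h.trans Measure.restrict_le_self.absolutelyContinuous), hμs]
  conv_lhs => rw [hμ]
  exact Measure.rnDeriv_withDensity _ (by fun_prop)

theorem condExp_indicator_ae_eq_comp_of_hasDerivAt {Ω : Type*} [MeasurableSpace Ω]
    {P : Measure Ω} [IsFiniteMeasure P] {U : Ω → ℝ} (hU : Measurable U) {s : Set ℝ}
    (hs : MeasurableSet s) (hlaw : P.map U = volume.restrict s) {E : Set Ω}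
    (hE : MeasurableSet E) {t : ℝ → ℝ}
    (ht : ∀ᵐ u ∂volume.restrict s, HasDerivAt (fun x => P.real (U ⁻¹' Iic x ∩ E)) (t u) u) :
    P[E.indicator 1 | MeasurableSpace.comap U inferInstance] =ᵐ[P] t ∘ U := by
  have hac : (P.restrict E).map U ≪ volume.restrict s := hlaw ▸
    Measure.restrict_le_self.absolutelyContinuous.map hU
  have hF : (fun x => ((P.restrict E).map U).real (Iic x)) = fun x => P.real (U ⁻¹' Iic x ∩ E) := by
    ext x
    rw [map_measureReal_apply hU measurableSet_Iic,
      measureReal_restrict_apply (hU measurableSet_Iic)]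
  have hdens : (fun u => (((P.restrict E).map U).rnDeriv (P.map U) u).toReal) =ᵐ[P.map U] t := by
    rw [hlaw]
    filter_upwards [rnDeriv_restrict_right hs hac, ht,
      ae_restrict_of_ae (ae_hasDerivAt_measureReal_Iic_s17 ((P.restrict E).map U))] with u hu ht hd
    rw [hu]
    exact (hF ▸ hd).unique ht
  have hE' : (fun ω => ((P.restrict E).rnDeriv P ω).toReal) =ᵐ[P] E.indicator 1 := by
    filter_upwards [Measure.rnDeriv_restrict_self P hE] with ω hω
    by_cases h : ω ∈ E <;> simp [hω, h]
  exact (condExp_congr_ae hE').symm.trans <|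
    (toReal_rnDeriv_map Measure.restrict_le_self.absolutelyContinuous hU).symm.trans <|
      ae_of_ae_map hU.aemeasurable hdens

section CondExp

variable {Ω : Type*} {m m₀ : MeasurableSpace Ω} {P : Measure Ω}

theorem condExp_integral_ae_eq [IsFiniteMeasure P] (hm : m ≤ m₀) {S G : Type*} [MeasurableSpace S]
    [NormedAddCommGroup G] [NormedSpace ℝ G] [CompleteSpace G] {ν : Measure S} [SFinite ν]
    {X Y : Ω → S → G} (hX : Integrable (uncurry X) (P.prod ν))
    (hY : Integrable (uncurry Y) (P.prod ν))
    (hYm : AEStronglyMeasurable[m] (fun ω => ∫ v, Y ω v ∂ν) P)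
    (h : ∀ᵐ v ∂ν, P[(X · v) | m] =ᵐ[P] (Y · v)) :
    P[fun ω => ∫ v, X ω v ∂ν | m] =ᵐ[P] fun ω => ∫ v, Y ω v ∂ν := by
  have hswap {B : Set Ω} {W : Ω → S → G} (hW : Integrable (uncurry W) (P.prod ν)) :
      ∫ ω in B, ∫ v, W ω v ∂ν ∂P = ∫ v, ∫ ω in B, W ω v ∂P ∂ν :=
    integral_integral_swap (hW.mono_measure (Measure.prod_mono Measure.restrict_le_self le_rfl))
  refine (ae_eq_condExp_of_forall_setIntegral_eq hm hX.integral_prod_left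
    (fun B _ _ => hY.integral_prod_left.integrableOn) (fun B hB _ => ?_) hYm).symm
  refine (hswap hY).trans (Eq.trans ?_ (hswap hX).symm)
  refine integral_congr_ae ?_
  filter_upwards [h, hX.prod_left_ae] with v hv hXv
  rw [← setIntegral_condExp (f := (X · v)) hm hXv hB]
  exact (setIntegral_congr_ae (hm _ hB) (hv.mono fun ω hω _ => hω)).symm

theorem covariance_condExp_left [IsProbabilityMeasure P] (hm : m ≤ m₀) {X Y : Ω → ℝ}
    (hX : MemLp X 2 P) (hY : MemLp Y 2 P) (hYm : AEStronglyMeasurable[m] Y P) :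
    cov[P[X | m], Y; P] = cov[X, Y; P] := by
  have hXY : P[X * Y | m] =ᵐ[P] P[X | m] * Y :=
    condExp_mul_of_aestronglyMeasurable_right hYm (hX.integrable_mul hY)
      (hX.integrable one_le_two)
  rw [covariance_eq_sub (hX.condExp one_le_two) hY, covariance_eq_sub hX hY, integral_condExp hm,
    ← integral_congr_ae hXY, integral_condExp hm]

end CondExp

theorem exists_measurable_forall_tendsto_nhdsWithin_Icc_diff_singleton {a b : ℝ} (hab : a < b) :
    ∃ x : ℕ → ℝ → ℝ, (∀ n, Measurable (x n)) ∧
      ∀ u ∈ Icc a b, Tendsto (x · u) atTop (𝓝[Icc a b \ {u}] u) := by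
  -- Moving from `u` towards an endpoint `e u ≠ u` keeps the approximations inside `[a, b] \ {u}`.
  let e : ℝ → ℝ := fun u => if u < b then b else a
  have he : Measurable e := Measurable.ite measurableSet_Iio measurable_const measurable_const
  refine ⟨fun n u => u + (1 / ((n : ℝ) + 1)) * (e u - u), fun n => by fun_prop, fun u hu => ?_⟩
  have heu : e u ∈ Icc a b ∧ e u - u ≠ 0 := by
    by_cases h : u < b
    · simp only [e, if_pos h]
      exact ⟨right_mem_Icc.2 hab.le, sub_ne_zero.2 h.ne'⟩
    · simp only [e, if_neg h]
      exact ⟨left_mem_Icc.2 hab.le, by linarith⟩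
  refine tendsto_nhdsWithin_iff.2 ⟨?_, .of_forall fun n => ⟨?_, ?_⟩⟩
  · simpa using (tendsto_one_div_add_atTop_nhds_zero_nat.mul_const (e u - u)).const_add u
  · refine (convex_Icc a b).add_smul_sub_mem hu heu.1 (t := 1 / ((n : ℝ) + 1)) ⟨by positivity, ?_⟩
    exact div_le_one_of_le₀ (by simp) (by positivity)
  · simpa [heu.2] using Nat.cast_add_one_ne_zero (R := ℝ) n

theorem aestronglyMeasurable_of_hasDerivWithinAt {S : Type*} [MeasurableSpace S] {ν : Measure S}
    [SFinite ν] {F f : ℝ → S → ℝ} {a b : ℝ} (hab : a < b) (hF : Measurable (uncurry F))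
    (hf : ∀ᵐ v ∂ν, ∀ u ∈ Icc a b, HasDerivWithinAt (F · v) (f u v) (Icc a b) u)
    {μ : Measure ℝ} (hμ : ∀ᵐ u ∂μ, u ∈ Icc a b) :
    AEStronglyMeasurable (uncurry f) (μ.prod ν) := by
  obtain ⟨x, hxm, hx⟩ := exists_measurable_forall_tendsto_nhdsWithin_Icc_diff_singleton hab
  refine aestronglyMeasurable_of_tendsto_ae atTop
    (f := fun n p => slope (F · p.2) p.1 (x n p.1)) (fun n => ?_) ?_
  · have hxn : Measurable fun p : ℝ × S => x n p.1 := (hxm n).comp measurable_fst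
    have h₁ : Measurable fun p : ℝ × S => F (x n p.1) p.2 :=
      hF.comp (hxn.prodMk measurable_snd)
    have h₀ : Measurable fun p : ℝ × S => F p.1 p.2 := hF
    simp only [slope_def_field]
    exact ((h₁.sub h₀).div (hxn.sub measurable_fst)).aestronglyMeasurable
  · filter_upwards [Measure.quasiMeasurePreserving_fst.ae hμ,
      Measure.quasiMeasurePreserving_snd.ae hf] with p hu hp
    exact (hasDerivWithinAt_iff_tendsto_slope.1 (hp p.1 hu)).comp (hx p.1 hu)

theorem integral_integral_eq_sub_of_hasDerivWithinAt {S G : Type*} [MeasurableSpace S]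
    [NormedAddCommGroup G] [NormedSpace ℝ G] [CompleteSpace G] {ν : Measure S} [SFinite ν]
    {g g' : ℝ → S → G} {a b : ℝ} (hab : a ≤ b)
    (hg : ∀ᵐ v ∂ν, ∀ u ∈ Icc a b, HasDerivWithinAt (g · v) (g' u v) (Icc a b) u)
    (hg' : Integrable (uncurry g') ((volume.restrict (Icc a b)).prod ν))
    (ha : Integrable (g a) ν) (hb : Integrable (g b) ν) :
    ∫ u in a..b, ∫ v, g' u v ∂ν = ∫ v, g b v ∂ν - ∫ v, g a v ∂ν := by
  rw [intervalIntegral.integral_of_le hab, ← integral_Icc_eq_integral_Ioc,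
    integral_integral_swap hg', ← integral_sub hb ha]
  refine integral_congr_ae ?_
  filter_upwards [hg, hg'.prod_left_ae] with v hv hint
  rw [integral_Icc_eq_integral_Ioc, ← intervalIntegral.integral_of_le hab]
  refine intervalIntegral.integral_eq_sub_of_hasDerivAt_of_le hab
    (fun u hu => (hv u hu).continuousWithinAt)
    (fun u hu => (hv u (Ioo_subset_Icc_self hu)).hasDerivAt (Icc_mem_nhds hu.1 hu.2)) ?_
  rw [intervalIntegrable_iff_integrableOn_Icc_of_le hab]
  exact hint

theorem covariance_congr {Ω : Type*} [MeasurableSpace Ω] {P : Measure Ω} {X X' Y Y' : Ω → ℝ}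
    (hX : X =ᵐ[P] X') (hY : Y =ᵐ[P] Y') : cov[X, Y; P] = cov[X', Y'; P] := by
  refine integral_congr_ae ?_
  rw [integral_congr_ae hX, integral_congr_ae hY]
  filter_upwards [hX, hY] with ω hωX hωY
  rw [hωX, hωY]

section IntegralIndicatorMul

variable {Ω S : Type*} {m m₀ : MeasurableSpace Ω} [MeasurableSpace S] {P : Measure Ω}
  {ν : Measure S}

theorem memLp_top_integral_prod [IsFiniteMeasure ν] {G : Type*} [NormedAddCommGroup G]
    [NormedSpace ℝ G] {f : Ω × S → G} (hf : MemLp f ∞ (P.prod ν)) :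
    MemLp (fun ω => ∫ v, f (ω, v) ∂ν) ∞ P := by
  refine memLp_top_of_bound hf.aestronglyMeasurable.integral_prod_right'
    (lpNorm f ∞ (P.prod ν) * ν.real univ) ?_
  filter_upwards [Measure.ae_ae_of_ae_prod (ae_le_lpNorm_exponent_top hf)] with ω hω
  exact norm_integral_le_of_norm_le_const hω

variable {E : S → Set Ω} {T : Ω → S → ℝ}

theorem memLp_indicator_one_mul (hE : MeasurableSet {p : Ω × S | p.1 ∈ E p.2}) {p : ℝ≥0∞}
    (hT : MemLp (uncurry T) p (P.prod ν)) :
    MemLp (fun q : Ω × S => (E q.2).indicator 1 q.1 * T q.1 q.2) p (P.prod ν) := by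
  refine (hT.indicator hE).ae_eq (.of_forall fun q => ?_)
  by_cases hq : q.1 ∈ E q.2 <;> simp [uncurry, hq]

variable [IsFiniteMeasure ν]

theorem memLp_top_integral_indicator_mul (hE : MeasurableSet {p : Ω × S | p.1 ∈ E p.2})
    (hT : MemLp (uncurry T) ∞ (P.prod ν)) :
    MemLp (fun ω => ∫ v, (E v).indicator 1 ω * T ω v ∂ν) ∞ P :=
  memLp_top_integral_prod (memLp_indicator_one_mul hE hT)

theorem memLp_top_integral_sq (hT : MemLp (uncurry T) ∞ (P.prod ν)) :
    MemLp (fun ω => ∫ v, T ω v ^ 2 ∂ν) ∞ P := by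
  simp only [sq]
  exact memLp_top_integral_prod (hT.mul' hT)

theorem condExp_integral_indicator_mul_ae_eq [IsFiniteMeasure P] (hm : m ≤ m₀)
    (hE : MeasurableSet {p : Ω × S | p.1 ∈ E p.2}) (hT : MemLp (uncurry T) ∞ (P.prod ν))
    (hTm : AEStronglyMeasurable[m] (fun ω => ∫ v, T ω v ^ 2 ∂ν) P)
    (hcond : ∀ᵐ v ∂ν, P[(E v).indicator 1 | m] =ᵐ[P] (T · v)) :
    P[fun ω => ∫ v, (E v).indicator 1 ω * T ω v ∂ν | m] =ᵐ[P] fun ω => ∫ v, T ω v ^ 2 ∂ν := by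
  have hX : Integrable (uncurry fun ω v => (E v).indicator 1 ω * T ω v) (P.prod ν) :=
    (memLp_indicator_one_mul hE hT).integrable le_top
  have hY : Integrable (uncurry fun ω v => T ω v ^ 2) (P.prod ν) :=
    (hT.mono_exponent le_top).integrable_sq
  refine condExp_integral_ae_eq hm hX hY hTm ?_
  filter_upwards [hcond, hX.prod_left_ae] with v hv hXv
  have hpull := condExp_mul_of_aestronglyMeasurable_right
    (stronglyMeasurable_condExp.aestronglyMeasurable.congr hv) hXv
    ((integrable_const 1).indicator (hE.preimage measurable_prodMk_right))
  filter_upwards [hpull, hv] with ω hω hvω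
  rw [sq]
  nth_rw 1 [← hvω]
  exact hω

theorem covariance_integral_indicator_mul_eq_variance [IsProbabilityMeasure P] (hm : m ≤ m₀)
    (hE : MeasurableSet {p : Ω × S | p.1 ∈ E p.2}) (hT : MemLp (uncurry T) ∞ (P.prod ν))
    (hTm : AEStronglyMeasurable[m] (fun ω => ∫ v, T ω v ^ 2 ∂ν) P)
    (hcond : ∀ᵐ v ∂ν, P[(E v).indicator 1 | m] =ᵐ[P] (T · v)) :
    cov[fun ω => ∫ v, (E v).indicator 1 ω * T ω v ∂ν, fun ω => ∫ v, T ω v ^ 2 ∂ν; P] =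
      Var[fun ω => ∫ v, T ω v ^ 2 ∂ν; P] := by
  have hA : MemLp (fun ω => ∫ v, T ω v ^ 2 ∂ν) 2 P :=
    (memLp_top_integral_sq hT).mono_exponent le_top
  rw [← covariance_condExp_left hm
    ((memLp_top_integral_indicator_mul hE hT).mono_exponent le_top) hA hTm,
    ← covariance_self hA.aemeasurable]
  exact covariance_congr (condExp_integral_indicator_mul_ae_eq hm hE hT hTm hcond) .rfl

end IntegralIndicatorMul

section UniformVariable

variable {Ω S : Type*} [MeasurableSpace Ω] [MeasurableSpace S] {P : Measure Ω}
  {ν : Measure S} {U : Ω → ℝ} {a b : ℝ}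

theorem mem_Icc_zero_one_of_hasDerivWithinAt [IsFiniteMeasure P] (hU : Measurable U)
    (hab : a < b) (hlaw : P.map U = volume.restrict (Icc a b)) {E : Set Ω}
    (hE : MeasurableSet E) {t u : ℝ} (hu : u ∈ Icc a b)
    (hd : HasDerivWithinAt (fun x => P.real (U ⁻¹' Iic x ∩ E)) t (Icc a b) u) :
    t ∈ Icc 0 1 := by
  have hacc : AccPt u (𝓟 (Icc a b)) := (uniqueDiffOn_Icc hab u hu).accPt
  have hcdf : ∀ x ∈ Icc a b, P.real (U ⁻¹' Iic x) = x - a := fun x hx => by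
    rw [← map_measureReal_apply hU measurableSet_Iic, hlaw,
      measureReal_restrict_apply measurableSet_Iic, inter_comm, ← Ici_inter_Iic, inter_assoc,
      Iic_inter_Iic, min_eq_right hx.2, Ici_inter_Iic, Real.volume_real_Icc_of_le hx.1]
  have hdiff : HasDerivWithinAt (fun x => P.real (U ⁻¹' Iic x \ E)) (1 - t) (Icc a b) u := by
    refine (((hasDerivWithinAt_id u _).sub_const a).sub hd).congr_of_mem (fun x hx => ?_) hu
    have := measureReal_inter_add_sdiff (μ := P) (s := U ⁻¹' Iic x) hE
    simp only [Pi.sub_apply, id_eq]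
    linarith [hcdf x hx]
  have hpre {x y : ℝ} (hxy : x ≤ y) : U ⁻¹' Iic x ⊆ U ⁻¹' Iic y :=
    preimage_mono (Iic_subset_Iic.2 hxy)
  exact ⟨hd.nonneg_of_monotoneOn hacc fun x _ y _ hxy =>
      measureReal_mono (inter_subset_inter_left E (hpre hxy)),
    sub_nonneg.1 <| hdiff.nonneg_of_monotoneOn hacc fun x _ y _ hxy =>
      measureReal_mono (sdiff_subset_sdiff_left (hpre hxy))⟩

theorem measurable_measureReal_preimage_Iic_inter [IsFiniteMeasure P] (hU : Measurable U)
    {E : S → Set Ω} (hE : MeasurableSet {p : Ω × S | p.1 ∈ E p.2}) :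
    Measurable (uncurry fun u v => P.real (U ⁻¹' Iic u ∩ E v)) := by
  have hle : MeasurableSet {q : (ℝ × S) × Ω | U q.2 ≤ q.1.1} :=
    measurableSet_le (by fun_prop) (by fun_prop)
  have hmem : MeasurableSet {q : (ℝ × S) × Ω | q.2 ∈ E q.1.2} :=
    hE.preimage (f := fun q : (ℝ × S) × Ω => (q.2, q.1.2)) (by fun_prop)
  exact (measurable_measure_prodMk_left (hle.inter hmem)).ennreal_toReal

theorem integral_comp_eq_intervalIntegral_of_map_eq {G : Type*} [NormedAddCommGroup G]
    [NormedSpace ℝ G] (hU : Measurable U) (hab : a ≤ b) (hlaw : P.map U = volume.restrict (Icc a b))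
    {f : ℝ → G} (hf : AEStronglyMeasurable f (P.map U)) :
    ∫ ω, f (U ω) ∂P = ∫ u in a..b, f u := by
  rw [← integral_map hU.aemeasurable hf, hlaw, integral_Icc_eq_integral_Ioc,
    intervalIntegral.integral_of_le hab]

variable [IsFiniteMeasure ν] {E : S → Set Ω} {τ τ' : ℝ → S → ℝ}
  (hU : Measurable U) (hab : a < b) (hlaw : P.map U = volume.restrict (Icc a b))
  (hE : MeasurableSet {p : Ω × S | p.1 ∈ E p.2})
  (hτ : ∀ᵐ v ∂ν, ∀ u ∈ Icc a b,
    HasDerivWithinAt (fun x => P.real (U ⁻¹' Iic x ∩ E v)) (τ u v) (Icc a b) u)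

include hU hab hlaw hE hτ

theorem memLp_top_uncurry_of_hasDerivWithinAt [IsFiniteMeasure P] {μ : Measure ℝ}
    [IsFiniteMeasure μ] (hμ : ∀ᵐ u ∂μ, u ∈ Icc a b) : MemLp (uncurry τ) ∞ (μ.prod ν) := by
  refine memLp_top_of_bound (aestronglyMeasurable_of_hasDerivWithinAt hab
    (measurable_measureReal_preimage_Iic_inter hU hE) hτ hμ) 1 ?_
  filter_upwards [Measure.quasiMeasurePreserving_fst.ae hμ,
    Measure.quasiMeasurePreserving_snd.ae hτ] with p hu hp
  have hp01 := mem_Icc_zero_one_of_hasDerivWithinAt hU hab hlaw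
    (hE.preimage measurable_prodMk_right) hu (hp _ hu)
  exact (Real.norm_of_nonneg hp01.1).trans_le hp01.2

theorem memLp_top_uncurry_map_of_hasDerivWithinAt [IsFiniteMeasure P] :
    MemLp (uncurry τ) ∞ ((P.map U).prod ν) :=
  memLp_top_uncurry_of_hasDerivWithinAt hU hab hlaw hE hτ (hlaw ▸ ae_restrict_mem measurableSet_Icc)

theorem memLp_top_uncurry_comp_of_hasDerivWithinAt [IsFiniteMeasure P] :
    MemLp (uncurry fun ω v => τ (U ω) v) ∞ (P.prod ν) :=
  (memLp_top_uncurry_map_of_hasDerivWithinAt hU hab hlaw hE hτ).comp_measurePreserving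
    ((hU.measurePreserving P).prod (MeasurePreserving.id ν))

theorem covariance_integral_indicator_mul_comp_eq_variance [IsProbabilityMeasure P] :
    cov[fun ω => ∫ v, (E v).indicator 1 ω * τ (U ω) v ∂ν, fun ω => ∫ v, τ (U ω) v ^ 2 ∂ν; P] =
      Var[fun ω => ∫ v, τ (U ω) v ^ 2 ∂ν; P] := by
  have hτU := memLp_top_uncurry_comp_of_hasDerivWithinAt hU hab hlaw hE hτ
  have hτm := memLp_top_uncurry_map_of_hasDerivWithinAt hU hab hlaw hE hτ
  refine covariance_integral_indicator_mul_eq_variance hU.comap_le hE hτU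
    ((hτm.aestronglyMeasurable.pow 2).integral_prod_right'.comp_ae_measurable' hU.aemeasurable) ?_
  filter_upwards [hτ] with v hv
  refine condExp_indicator_ae_eq_comp_of_hasDerivAt hU measurableSet_Icc hlaw
    (hE.preimage measurable_prodMk_right) (t := (τ · v)) ?_
  rw [← restrict_Ioo_eq_restrict_Icc]
  filter_upwards [ae_restrict_mem measurableSet_Ioo] with u hu
  exact (hv u (Ioo_subset_Icc_self hu)).hasDerivAt (Icc_mem_nhds hu.1 hu.2)

variable (hτ' : ∀ᵐ v ∂ν, ∀ u ∈ Icc a b, HasDerivWithinAt (τ · v) (τ' u v) (Icc a b) u)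
  (hint : Integrable (fun p : ℝ × S => τ p.1 p.2 * τ' p.1 p.2)
    ((volume.restrict (Icc a b)).prod ν))

include hτ' hint

theorem integral_integral_mul_deriv_eq_sub_div_two [IsFiniteMeasure P] {c : ℝ} (hc : c ∈ Icc a b) :
    ∫ u in c..b, ∫ v, τ u v * τ' u v ∂ν = (∫ v, τ b v ^ 2 ∂ν - ∫ v, τ c v ^ 2 ∂ν) / 2 := by
  have hsub : Icc c b ⊆ Icc a b := Icc_subset_Icc_left hc.1
  have hsec : ∀ u ∈ Icc a b, Integrable (fun v => τ u v ^ 2) ν := fun u hu => by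
    have h := memLp_top_uncurry_of_hasDerivWithinAt hU hab hlaw hE hτ
      (μ := Measure.dirac u) ((ae_dirac_iff measurableSet_Icc).2 hu)
    rw [Measure.dirac_prod] at h
    exact ((h.comp_of_map measurable_prodMk_left.aemeasurable).mono_exponent le_top).integrable_sq
  rw [eq_div_iff two_ne_zero, mul_comm, ← intervalIntegral.integral_const_mul]
  simp only [← integral_const_mul]
  refine integral_integral_eq_sub_of_hasDerivWithinAt (g := fun u v => τ u v ^ 2) hc.2 ?_ ?_
    (hsec c hc) (hsec b (right_mem_Icc.2 hab.le))
  · filter_upwards [hτ'] with v hv u hu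
    refine (((hv u (hsub hu)).mono hsub).pow 2).congr_deriv ?_
    ring
  · exact (hint.mono_measure
      (Measure.prod_mono (Measure.restrict_mono hsub le_rfl) le_rfl)).const_mul 2

theorem integral_integral_mul_deriv_comp_ae_eq_sub_div_two [IsFiniteMeasure P] :
    (fun ω => ∫ u in U ω..b, ∫ v, τ u v * τ' u v ∂ν) =ᵐ[P]
      fun ω => (∫ v, τ b v ^ 2 ∂ν - ∫ v, τ (U ω) v ^ 2 ∂ν) / 2 := by
  have hUmem : ∀ᵐ u ∂P.map U, u ∈ Icc a b := hlaw ▸ ae_restrict_mem measurableSet_Icc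
  filter_upwards [ae_of_ae_map hU.aemeasurable hUmem] with ω hω
  exact integral_integral_mul_deriv_eq_sub_div_two hU hab hlaw hE hτ hτ' hint hω

theorem two_mul_covariance_eq_neg_variance [IsProbabilityMeasure P] :
    2 * cov[fun ω => ∫ v, (E v).indicator 1 ω * τ (U ω) v ∂ν,
        fun ω => ∫ u in U ω..b, ∫ v, τ u v * τ' u v ∂ν; P] =
      -Var[fun ω => ∫ v, τ (U ω) v ^ 2 ∂ν; P] := by
  have hτU := memLp_top_uncurry_comp_of_hasDerivWithinAt hU hab hlaw hE hτ
  rw [covariance_congr .rfl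
      (integral_integral_mul_deriv_comp_ae_eq_sub_div_two hU hab hlaw hE hτ hτ' hint),
    covariance_fun_div_right, mul_div_cancel₀ _ two_ne_zero,
    covariance_const_sub_right ((memLp_top_integral_sq hτU).integrable le_top),
    covariance_integral_indicator_mul_comp_eq_variance hU hab hlaw hE hτ]

theorem two_mul_integral_mul_sub_integral_mul_integral_eq [IsProbabilityMeasure P] :
    2 * ((∫ ω, (∫ v, (E v).indicator 1 ω * τ (U ω) v ∂ν) *
          (∫ u in U ω..b, ∫ v, τ u v * τ' u v ∂ν) ∂P) -
        (∫ ω, ∫ v, (E v).indicator 1 ω * τ (U ω) v ∂ν ∂P) *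
          ∫ ω, (∫ u in U ω..b, ∫ v, τ u v * τ' u v ∂ν) ∂P) =
      -(∫ u in a..b, (∫ v, τ u v ^ 2 ∂ν) ^ 2) + (∫ u in a..b, ∫ v, τ u v ^ 2 ∂ν) ^ 2 := by
  have hτU := memLp_top_uncurry_comp_of_hasDerivWithinAt hU hab hlaw hE hτ
  have hA : MemLp (fun ω => ∫ v, τ (U ω) v ^ 2 ∂ν) 2 P :=
    (memLp_top_integral_sq hτU).mono_exponent le_top
  have hAm : AEStronglyMeasurable (fun u => ∫ v, τ u v ^ 2 ∂ν) (P.map U) :=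
    ((memLp_top_uncurry_map_of_hasDerivWithinAt hU hab hlaw hE
      hτ).aestronglyMeasurable.pow 2).integral_prod_right'
  have hZ₂ : MemLp (fun ω => ∫ u in U ω..b, ∫ v, τ u v * τ' u v ∂ν) 2 P := by
    refine MemLp.ae_eq (integral_integral_mul_deriv_comp_ae_eq_sub_div_two hU hab hlaw hE hτ hτ'
      hint).symm ?_
    simp only [div_eq_mul_inv]
    exact ((memLp_const _).sub hA).mul_const _
  have h := two_mul_covariance_eq_neg_variance hU hab hlaw hE hτ hτ' hint
  rw [covariance_eq_sub ((memLp_top_integral_indicator_mul hE hτU).mono_exponent le_top) hZ₂,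
    variance_eq_sub hA] at h
  rw [← integral_comp_eq_intervalIntegral_of_map_eq hU hab.le hlaw hAm,
    ← integral_comp_eq_intervalIntegral_of_map_eq hU hab.le hlaw
      (f := fun u => (∫ v, τ u v ^ 2 ∂ν) ^ 2) (hAm.pow 2)]
  simp only [Pi.mul_apply, Pi.pow_apply] at h ⊢
  linarith

end UniformVariable

theorem intervalIntegral_ite_le_mul {g : ℝ → ℝ} {a b c : ℝ} (hc : c ∈ Icc a b) :
    ∫ u in a..b, (if c ≤ u then 1 else 0) * g u = ∫ u in c..b, g u := by
  have hind : (fun u => (if c ≤ u then 1 else 0) * g u) = (Ici c).indicator g := by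
    ext u
    simp [indicator_apply]
  rw [hind, intervalIntegral.integral_of_le (hc.1.trans hc.2),
    intervalIntegral.integral_of_le hc.2, ← integral_Icc_eq_integral_Ioc,
    ← integral_Icc_eq_integral_Ioc, setIntegral_indicator measurableSet_Ici, ← Ici_inter_Iic,
    inter_right_comm, Ici_inter_Ici, sup_eq_right.2 hc.1, Ici_inter_Iic]

theorem stmt17_general {Ω : Type*} [MeasurableSpace Ω] (P : Measure Ω) [IsProbabilityMeasure P]
    (U V : Ω → ℝ) (hU : Measurable U) (hV : Measurable V)
    (hUunif : Measure.map U P = volume.restrict (Icc (0 : ℝ) 1))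
    (C : ℝ → ℝ → ℝ)
    (hC : ∀ u v, C u v = (P {ω | U ω ≤ u ∧ V ω ≤ v}).toReal)
    (τ dτ : ℝ → ℝ → ℝ)
    (hCderiv : ∀ v ∈ Icc (0 : ℝ) 1, ∀ u ∈ Icc (0 : ℝ) 1,
      HasDerivWithinAt (fun u => C u v) (τ u v) (Icc 0 1) u)
    (hτderiv : ∀ v ∈ Icc (0 : ℝ) 1, ∀ u ∈ Icc (0 : ℝ) 1,
      HasDerivWithinAt (fun u => τ u v) (dτ u v) (Icc 0 1) u)
    (hint : IntegrableOn (fun p : ℝ × ℝ => τ p.1 p.2 * dτ p.1 p.2) (Icc 0 1 ×ˢ Icc 0 1))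
    (Z₁ Z₂ : Ω → ℝ)
    (hZ₁ : ∀ ω, Z₁ ω = ∫ v in (0:ℝ)..1, (if V ω ≤ v then (1 : ℝ) else 0) * τ (U ω) v)
    (hZ₂ : ∀ ω, Z₂ ω = ∫ u in (0:ℝ)..1, ∫ v in (0:ℝ)..1,
      (if U ω ≤ u then (1 : ℝ) else 0) * (τ u v * dτ u v)) :
    2 * ((∫ ω, Z₁ ω * Z₂ ω ∂P) - (∫ ω, Z₁ ω ∂P) * (∫ ω, Z₂ ω ∂P)) =
      -(∫ u in (0:ℝ)..1, ∫ v in (0:ℝ)..1, ∫ w in (0:ℝ)..1, τ u v ^ 2 * τ u w ^ 2)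
        + (∫ u in (0:ℝ)..1, ∫ v in (0:ℝ)..1, τ u v ^ 2) ^ 2 := by
  have hunit (g : ℝ → ℝ) : ∫ v in (0 : ℝ)..1, g v = ∫ v in Icc (0 : ℝ) 1, g v := by
    rw [intervalIntegral.integral_of_le zero_le_one, integral_Icc_eq_integral_Ioc]
  have hZ₁' : Z₁ = fun ω => ∫ v in Icc (0 : ℝ) 1, (V ⁻¹' Iic v).indicator 1 ω * τ (U ω) v := by
    ext ω
    rw [hZ₁, hunit]
    congr with v
  have hZ₂' : Z₂ =ᵐ[P] fun ω => ∫ u in U ω..1, ∫ v in Icc (0 : ℝ) 1, τ u v * dτ u v := by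
    have hUmem : ∀ᵐ u ∂P.map U, u ∈ Icc 0 1 := hUunif ▸ ae_restrict_mem measurableSet_Icc
    filter_upwards [ae_of_ae_map hU.aemeasurable hUmem] with ω hω
    simp only [hZ₂, intervalIntegral.integral_const_mul, intervalIntegral_ite_le_mul hω]
    simp only [hunit]
  have hZ₁Z₂ : ∫ ω, Z₁ ω * Z₂ ω ∂P =
      ∫ ω, Z₁ ω * (∫ u in U ω..1, ∫ v in Icc (0 : ℝ) 1, τ u v * dτ u v) ∂P :=
    integral_congr_ae (EventuallyEq.rfl.mul hZ₂')
  rw [hZ₁Z₂, integral_congr_ae hZ₂', hZ₁']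
  simp only [intervalIntegral.integral_const_mul, intervalIntegral.integral_mul_const, ← sq]
  simp only [hunit]
  rw [IntegrableOn, Measure.volume_eq_prod, ← Measure.prod_restrict] at hint
  have h := two_mul_integral_mul_sub_integral_mul_integral_eq (E := fun v => V ⁻¹' Iic v) hU
    zero_lt_one hUunif (measurableSet_le (hV.comp measurable_fst) measurable_snd)
    (ae_restrict_of_forall_mem measurableSet_Icc fun v hv u hu =>
      (hCderiv v hv u hu).congr_of_mem (fun x _ => (hC x v).symm) hu)
    (ae_restrict_of_forall_mem measurableSet_Icc hτderiv)
    hint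
  simpa only [hunit] using h

/-- for `(U,V)` with uniform marginals on `[0,1]`, copula-type distribution
function `C` with `∂₁C = τ`, `τ` continuously differentiable in its first argument with
derivative `∂₁τ = dτ`, and
`Z₁ = ∫₀¹ 1{V ≤ v} τ(U,v) dv`, `Z₂ = ∫₀¹∫₀¹ 1{U ≤ u} τ(u,v) ∂₁τ(u,v) du dv`, one has
`2 Cov(Z₁, Z₂) = -∫ τ²(u,v) τ²(u,w) du dv dw + (∫ τ²(u,v) du dv)²`. -/
theorem stmt17 {Ω : Type*} [MeasurableSpace Ω] (P : Measure Ω) [IsProbabilityMeasure P]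
    (U V : Ω → ℝ) (hU : Measurable U) (hV : Measurable V)
    (hUunif : Measure.map U P = volume.restrict (Icc (0 : ℝ) 1))
    (hVunif : Measure.map V P = volume.restrict (Icc (0 : ℝ) 1))
    (C : ℝ → ℝ → ℝ)
    (hC : ∀ u v, C u v = (P {ω | U ω ≤ u ∧ V ω ≤ v}).toReal)
    (τ dτ : ℝ → ℝ → ℝ)
    (hCderiv : ∀ v ∈ Icc (0 : ℝ) 1, ∀ u ∈ Icc (0 : ℝ) 1,
      HasDerivWithinAt (fun u => C u v) (τ u v) (Icc 0 1) u)
    (hτcont : ContinuousOn (fun p : ℝ × ℝ => τ p.1 p.2) (Icc 0 1 ×ˢ Icc 0 1))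
    (hτderiv : ∀ v ∈ Icc (0 : ℝ) 1, ∀ u ∈ Icc (0 : ℝ) 1,
      HasDerivWithinAt (fun u => τ u v) (dτ u v) (Icc 0 1) u)
    (hdτcont : ContinuousOn (fun p : ℝ × ℝ => dτ p.1 p.2) (Icc 0 1 ×ˢ Icc 0 1))
    (Z₁ Z₂ : Ω → ℝ)
    (hZ₁ : ∀ ω, Z₁ ω = ∫ v in (0:ℝ)..1, (if V ω ≤ v then (1 : ℝ) else 0) * τ (U ω) v)
    (hZ₂ : ∀ ω, Z₂ ω = ∫ u in (0:ℝ)..1, ∫ v in (0:ℝ)..1,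
      (if U ω ≤ u then (1 : ℝ) else 0) * (τ u v * dτ u v)) :
    2 * ((∫ ω, Z₁ ω * Z₂ ω ∂P) - (∫ ω, Z₁ ω ∂P) * (∫ ω, Z₂ ω ∂P)) =
      -(∫ u in (0:ℝ)..1, ∫ v in (0:ℝ)..1, ∫ w in (0:ℝ)..1, τ u v ^ 2 * τ u w ^ 2)
        + (∫ u in (0:ℝ)..1, ∫ v in (0:ℝ)..1, τ u v ^ 2) ^ 2 :=
  stmt17_general P U V hU hV hUunif C hC τ dτ hCderiv hτderiv
    ((hτcont.mul hdτcont).integrableOn_compact (isCompact_Icc.prod isCompact_Icc)) Z₁ Z₂ hZ₁ hZ₂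
end
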